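/- arXiv:2509.21538 — 2 statements merged into one kernel-verified Lean document; each statement's English description precedes it below -/
import Mathlib

section
/- Number of positive boxes: for the N-vectorial Dirichlet GFF on Λ_n, let N^α_+ := #{ B ∈ Π_α ∩ 𝔹 : (h_B)^i > 0 for all 1 ≤ i ≤ N }. Then for any α ∈ (0,1) and ξ > 0, P_n[ N^α_+ ≤ n^{2(1−α)−ξ} ] → 0 as n → ∞. -/
open MeasureTheory Real Filter Asymptotics
open scoped ENNReal NNReal Classical BigOperators

noncomputable section

abbrev Site : Type := ℤ × ℤ

abbrev Spin (N : ℕ) : Type := EuclideanSpace ℝ (Fin N)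

abbrev Conf (N : ℕ) : Type := Site → Spin N

/-- `Λ_n = [-n/2, n/2]² ∩ ℤ²`. -/
def Lam (n : ℕ) : Finset Site :=
  (Finset.Icc (-(n : ℤ)) (n : ℤ) ×ˢ Finset.Icc (-(n : ℤ)) (n : ℤ)).filter
    (fun x => 2 * |x.1| ≤ (n : ℤ) ∧ 2 * |x.2| ≤ (n : ℤ))

/-- extension of a configuration on `Λ_n` by zero (Dirichlet boundary condition). -/
def extZero (n : ℕ) {N : ℕ} (ω : {x // x ∈ Lam n} → Spin N) : Conf N :=
  fun x => if h : x ∈ Lam n then ω ⟨x, h⟩ else 0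

/-- Dirichlet energy `(1/(8π)) Σ_{x∼y} |φ(x) - φ(y)|²`, i.e. coupling `𝔤 = 1/(2π)`;
the sum over the enlarged box `Λ_{n+4}` covers all nearest-neighbour edges meeting
`Λ_n ∪ ∂Λ_n` (edges not meeting `Λ_n` contribute `0` since `φ ≡ 0` there). -/
def dirEnergy (n N : ℕ) (φ : Conf N) : ℝ :=
  (1 / (8 * π)) *
    ∑ x ∈ Lam (n + 4), (‖φ x - φ (x + ((1 : ℤ), (0 : ℤ)))‖ ^ 2 +
      ‖φ x - φ (x + ((0 : ℤ), (1 : ℤ)))‖ ^ 2)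

def gffAux (n N : ℕ) : Measure ({x // x ∈ Lam n} → Spin N) :=
  (Measure.pi fun _ => (volume : Measure (Spin N))).withDensity
    (fun ω => ENNReal.ofReal (Real.exp (- dirEnergy n N (extZero n ω))))

/-- The law `P_n` of the `N`-vectorial Dirichlet GFF on `Λ_n`, viewed as a probability
measure on full configurations (extended by `0` outside `Λ_n`). -/
def gff (n N : ℕ) : Measure (Conf N) :=
  (gffAux n N Set.univ)⁻¹ • (gffAux n N).map (extZero n)

/-- conditional probability `μ[A | B]`. -/
def condProb {α : Type*} [MeasurableSpace α] (μ : Measure α) (B A : Set α) : ℝ≥0∞ :=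
  μ (A ∩ B) / μ B

/-- conditional expectation `E_μ[f | B]`. -/
def condExpOn {α : Type*} [MeasurableSpace α] (μ : Measure α) (B : Set α) (f : α → ℝ) : ℝ :=
  (∫ x in B, f x ∂μ) / (μ B).toReal

/-- `Λ = [-1/2,1/2]²`. -/
def unitSq : Set (ℝ × ℝ) := Set.Icc (-(1/2 : ℝ), -(1/2 : ℝ)) (1/2, 1/2)

/-- `D_n = (nD) ∩ ℤ²`. -/
def Dn (D : Set (ℝ × ℝ)) (n : ℕ) : Set Site :=
  {x | ((x.1 : ℝ) / n, (x.2 : ℝ) / n) ∈ D}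

/-- the event `Ω^I_V = {φ(x) ∉ I ∀ x ∈ V}`. -/
def avoids {N : ℕ} (V : Set Site) (I : Set (Spin N)) : Set (Conf N) :=
  {φ | ∀ x ∈ V, φ x ∉ I}

/-- the closest even integer to `n^α`. -/
def evenSide (n : ℕ) (α : ℝ) : ℤ := 2 * round ((n : ℝ) ^ α / 2)

/-- the discrete box of side length `a` centered at `c`. -/
def boxAt (a : ℤ) (c : Site) : Set Site :=
  {y | 2 * |y.1 - c.1| ≤ a ∧ 2 * |y.2 - c.2| ≤ a}

/-- the inner boundary of the discrete box of side length `a` centered at `c`. -/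
def innerBdryAt (a : ℤ) (c : Site) : Set Site :=
  {y | y ∈ boxAt a c ∧ (2 * |y.1 - c.1| = a ∨ 2 * |y.2 - c.2| = a)}

/-- `c` is a center of a box of `Π_α(x₀)`. -/
def isCenter (D : Set (ℝ × ℝ)) (n : ℕ) (α : ℝ) (x0 : Site) (c : Site) : Prop :=
  (∃ k l : ℤ, c = x0 + (k * evenSide n α, l * evenSide n α)) ∧
    boxAt (evenSide n α) c ⊆ Dn D n

/-- the centers of the boxes of `Π_α(x₀)`, as a finite set. -/
def centersF (D : Set (ℝ × ℝ)) (n : ℕ) (α : ℝ) (x0 : Site) : Finset Site :=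
  (Lam n).filter (fun c => isCenter D n α x0 c)

/-- `⨅_α(x₀)`, the union of the inner boundaries of the boxes of `Π_α(x₀)`. -/
def gridK (D : Set (ℝ × ℝ)) (n : ℕ) (α : ℝ) (x0 : Site) : Set Site :=
  ⋃ c ∈ centersF D n α x0, innerBdryAt (evenSide n α) c

/-- the σ-algebra generated by the coordinates in `K`. -/
def mGrid (N : ℕ) (K : Set Site) : MeasurableSpace (Conf N) :=
  MeasurableSpace.comap (fun φ (y : K) => φ y) inferInstance

/-- the harmonic extension `h^K(c) = E[φ(c) | F_K]` as a random variable. -/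
def harmExt (n N : ℕ) (K : Set Site) (c : Site) : Conf N → Spin N :=
  (gff n N)[fun ψ => ψ c | mGrid N K]

/-- covariance of two real random variables. -/
def covar {α : Type*} [MeasurableSpace α] (μ : Measure α) (X Y : α → ℝ) : ℝ :=
  ∫ ω, (X ω - ∫ ω', X ω' ∂μ) * (Y ω - ∫ ω', Y ω' ∂μ) ∂μ

/-- the lattice Euclidean ball `𝔹 = B²(0, ρ) ∩ ℤ²`. -/
def latBall (ρ : ℝ) : Set Site :=
  {x | Real.sqrt ((x.1 : ℝ) ^ 2 + (x.2 : ℝ) ^ 2) < ρ}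

/-- `N^α_+`: the number of boxes `B ∈ Π_α ∩ 𝔹` with all coordinates of `h_B` positive. -/
def countPos (D : Set (ℝ × ℝ)) (N n : ℕ) (α : ℝ) (ρ : ℝ) (φ : Conf N) : ℕ :=
  ((centersF D n α (0, 0)).filter (fun c =>
    boxAt (evenSide n α) c ⊆ latBall ρ ∧
      ∀ i : Fin N, 0 < harmExt n N (gridK D n α (0, 0)) c φ i)).card

/-!
On the Dirichlet space of functions supported in `Λ_n` the field is isonormal, so the values
`h_c = E[φ(c) | F_K]` at the box centres are the isonormal images of the projections `P G_c` of the
Green functions onto the orthogonal complement of the functions vanishing on `K = ⨅_α`, and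
`⟪P G_c, P G_d⟫ = (P G_c)(d)`. Take an `m × m` array of boxes inside `𝔹`, with
`m = n ^ (1 - α - o(1))`.

* Each `h_c` has variance at least of order `log n`: test `P G_c` against a logarithmic cut-off
  between the scales `n ^ α` and `n / 4`, which is constant on the boundary of the box of `c`.
* A discrete Sobolev inequality bounds `∑_d (P G_c)(d) ^ 2` over the array by
  `o(m ^ 2 log n) * ‖P G_c‖ ^ 2`. So for most pairs the correlation of `h_c` and `h_d` is small, and
  by continuity of the joint orthant probability at correlation `0`, the events `h_c > 0` and
  `h_d > 0` are nearly independent.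

Hence the number of positive boxes in the array has mean `p m ^ 2`, where `p > 0` is the Gaussian
probability of the positive orthant, and variance `o(m ^ 4)`. Chebyshev's inequality shows that it
is at least `p m ^ 2 / 2 ≥ n ^ (2 (1 - α) - ξ)` with probability tending to `1`.
-/

/-! ### The discrete Dirichlet energy -/

section Energy

/-- The decrement of `f` along the oriented edge `(z, z + e)`. -/
def edgeDiff (e : Site) (f : Site → ℝ) (z : Site) : ℝ := f z - f (z + e)

/-- The squared discrete gradient of `f` at `z`: each nearest-neighbour edge is attributed to its
left or lower endpoint. -/
def gradSq (f : Site → ℝ) (z : Site) : ℝ := edgeDiff (1, 0) f z ^ 2 + edgeDiff (0, 1) f z ^ 2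

/-- The unnormalized Dirichlet energy of `f`, over the same edges as in `dirEnergy`. -/
def energy (n : ℕ) (f : Site → ℝ) : ℝ := ∑ x ∈ Lam (n + 4), gradSq f x

lemma gradSq_nonneg (f : Site → ℝ) (z : Site) : 0 ≤ gradSq f z := by
  unfold gradSq
  positivity

lemma energy_nonneg (n : ℕ) (f : Site → ℝ) : 0 ≤ energy n f :=
  Finset.sum_nonneg fun x _ => gradSq_nonneg f x

lemma mem_Lam {n : ℕ} {x : Site} : x ∈ Lam n ↔ 2 * |x.1| ≤ (n : ℤ) ∧ 2 * |x.2| ≤ (n : ℤ) := by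
  simp only [Lam, Finset.mem_filter, Finset.mem_product, Finset.mem_Icc, ← abs_le,
    and_iff_right_iff_imp]
  rintro ⟨h1, h2⟩
  have := abs_nonneg x.1
  have := abs_nonneg x.2
  omega

variable {n : ℕ} {f : Site → ℝ}

lemma edgeDiff_eq_zero_of_notMem_Lam (hf : ∀ x ∉ Lam n, f x = 0) {e x : Site}
    (he₁ : |e.1| ≤ 1) (he₂ : |e.2| ≤ 1) (hx : x ∉ Lam (n + 4)) : edgeDiff e f x = 0 := by
  have hx' : x ∉ Lam n ∧ x + e ∉ Lam n := by
    simp only [mem_Lam, Prod.fst_add, Prod.snd_add, Nat.cast_add, Nat.cast_ofNat] at hx ⊢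
    have := abs_sub_abs_le_abs_add x.1 e.1
    have := abs_sub_abs_le_abs_add x.2 e.2
    omega
  rw [edgeDiff, hf _ hx'.1, hf _ hx'.2, sub_zero]

lemma gradSq_eq_zero_of_notMem_Lam (hf : ∀ x ∉ Lam n, f x = 0) {x : Site}
    (hx : x ∉ Lam (n + 4)) : gradSq f x = 0 := by
  simp [gradSq, edgeDiff_eq_zero_of_notMem_Lam hf _ _ hx]

lemma sum_gradSq_le_energy (hf : ∀ x ∉ Lam n, f x = 0) (T : Finset Site) :
    ∑ x ∈ T, gradSq f x ≤ energy n f :=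
  calc ∑ x ∈ T, gradSq f x ≤ ∑ x ∈ T ∪ Lam (n + 4), gradSq f x :=
        Finset.sum_le_sum_of_subset_of_nonneg Finset.subset_union_left
          fun x _ _ => gradSq_nonneg f x
    _ = energy n f :=
        (Finset.sum_subset Finset.subset_union_right
          fun _ _ hx => gradSq_eq_zero_of_notMem_Lam hf hx).symm

end Energy

section HarmonicSums

lemma one_div_add_one_le_log_sub_log {k : ℕ} (hk : 1 ≤ k) :
    1 / ((k : ℝ) + 1) ≤ log (k + 1) - log k := by
  have hk0 : (0 : ℝ) < k := by exact_mod_cast hk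
  rw [← log_div (by positivity) hk0.ne']
  calc 1 / ((k : ℝ) + 1) = 1 - (((k : ℝ) + 1) / k)⁻¹ := by field_simp; ring
    _ ≤ log (((k : ℝ) + 1) / k) := one_sub_inv_le_log_of_pos (by positivity)

lemma log_sub_log_le_one_div {k : ℕ} (hk : 1 ≤ k) :
    log ((k : ℝ) + 1) - log k ≤ 1 / (k : ℝ) := by
  have hk0 : (0 : ℝ) < k := by exact_mod_cast hk
  rw [← log_div (by positivity) hk0.ne']
  calc log (((k : ℝ) + 1) / k) ≤ ((k : ℝ) + 1) / k - 1 := log_le_sub_one_of_pos (by positivity)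
    _ = 1 / (k : ℝ) := by field_simp; ring

lemma sum_Ico_one_div_add_one_le_log_sub_log {a b : ℕ} (ha : 1 ≤ a) (hab : a ≤ b) :
    ∑ j ∈ Finset.Ico a b, 1 / ((j : ℝ) + 1) ≤ log b - log a := by
  rw [← Finset.sum_Ico_sub (fun k : ℕ => log k) hab]
  refine Finset.sum_le_sum fun j hj => ?_
  simpa using one_div_add_one_le_log_sub_log (ha.trans (Finset.mem_Ico.1 hj).1)

lemma log_sub_log_le_sum_Ico_one_div {a b : ℕ} (ha : 1 ≤ a) (hab : a ≤ b) :
    log b - log a ≤ ∑ j ∈ Finset.Ico a b, 1 / (j : ℝ) := by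
  rw [← Finset.sum_Ico_sub (fun k : ℕ => log k) hab]
  refine Finset.sum_le_sum fun j hj => ?_
  simpa using log_sub_log_le_one_div (ha.trans (Finset.mem_Ico.1 hj).1)

lemma sum_Ico_zero_one_div_add_one_le_one_add_log {b : ℕ} (hb : 1 ≤ b) :
    ∑ j ∈ Finset.Ico 0 b, 1 / ((j : ℝ) + 1) ≤ 1 + log b := by
  rw [Finset.sum_eq_sum_Ico_succ_bot hb]
  simpa using sum_Ico_one_div_add_one_le_log_sub_log le_rfl hb

end HarmonicSums

/-! ### Sobolev-type bounds along widening segments -/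

section SegmentAverages

/-- The average of `f` over the vertical segment of `j + 1` sites whose lower end is at horizontal
distance `j` to the right of `x`. -/
def segAvg (f : Site → ℝ) (x : Site) (j : ℕ) : ℝ :=
  (∑ i ∈ Finset.range (j + 1), f (x + ((j : ℤ), (i : ℤ)))) / ((j : ℝ) + 1)

lemma segAvg_zero (f : Site → ℝ) (x : Site) : segAvg f x 0 = f x := by
  have : x + ((0 : ℤ), (0 : ℤ)) = x := add_zero x
  simp [segAvg, this]

lemma sum_range_add_one_mul_sub (u : ℕ → ℝ) (m : ℕ) :
    ∑ i ∈ Finset.range m, ((i : ℝ) + 1) * (u (i + 1) - u i) =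
      m * u m - ∑ i ∈ Finset.range m, u i := by
  induction m with
  | zero => simp
  | succ k ih =>
    rw [Finset.sum_range_succ, ih, Finset.sum_range_succ]
    push_cast
    ring

lemma avg_succ_sub_avg (u w : ℕ → ℝ) {m : ℕ} (hm : m ≠ 0) :
    (∑ i ∈ Finset.range (m + 1), u i) / ((m : ℝ) + 1) - (∑ i ∈ Finset.range m, w i) / m =
      (∑ i ∈ Finset.range m, (u i - w i + ((i : ℝ) + 1) / (m + 1) * (u (i + 1) - u i))) / m := by
  have hm1 : (m : ℝ) + 1 ≠ 0 := by positivity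
  simp only [div_mul_eq_mul_div]
  rw [Finset.sum_add_distrib, ← Finset.sum_div, sum_range_add_one_mul_sub,
    Finset.sum_sub_distrib, Finset.sum_range_succ]
  field_simp
  ring

lemma segAvg_succ_sub (f : Site → ℝ) (x : Site) (j : ℕ) :
    segAvg f x (j + 1) - segAvg f x j = -(∑ i ∈ Finset.range (j + 1),
      (edgeDiff (1, 0) f (x + ((j : ℤ), (i : ℤ))) + ((i : ℝ) + 1) / (j + 2) *
        edgeDiff (0, 1) f (x + (((j + 1 : ℕ) : ℤ), (i : ℤ))))) / (j + 1) := by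
  have h := avg_succ_sub_avg (fun i => f (x + (((j + 1 : ℕ) : ℤ), (i : ℤ))))
    (fun i => f (x + ((j : ℤ), (i : ℤ)))) j.succ_ne_zero
  push_cast at h
  rw [segAvg, segAvg, ← Finset.sum_neg_distrib]
  push_cast
  refine h.trans ?_
  congr 1
  refine Finset.sum_congr rfl fun i _ => ?_
  simp only [edgeDiff, add_assoc, Prod.mk_add_mk, add_zero]
  ring

lemma add_mul_sq_le {p q t : ℝ} (ht0 : 0 ≤ t) (ht1 : t ≤ 1) :
    (p + t * q) ^ 2 ≤ 2 * (p ^ 2 + q ^ 2) := by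
  have htq : (t * q) ^ 2 ≤ q ^ 2 := by
    rw [mul_pow]
    exact mul_le_of_le_one_left (sq_nonneg q) (pow_le_one₀ ht0 ht1)
  linarith [add_sq_le (a := p) (b := t * q)]

lemma sq_segAvg_succ_sub_le (f : Site → ℝ) (x : Site) (j : ℕ) :
    (segAvg f x (j + 1) - segAvg f x j) ^ 2 ≤ 2 * (1 / ((j : ℝ) + 1)) *
      ∑ i ∈ Finset.range (j + 1), (edgeDiff (1, 0) f (x + ((j : ℤ), (i : ℤ))) ^ 2
        + edgeDiff (0, 1) f (x + (((j + 1 : ℕ) : ℤ), (i : ℤ))) ^ 2) := by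
  rw [segAvg_succ_sub, div_pow, neg_sq, div_le_iff₀ (by positivity)]
  refine sq_sum_le_card_mul_sum_sq.trans ?_
  calc _ ≤ ((j : ℝ) + 1) * ∑ i ∈ Finset.range (j + 1),
        2 * (edgeDiff (1, 0) f (x + ((j : ℤ), (i : ℤ))) ^ 2
          + edgeDiff (0, 1) f (x + (((j + 1 : ℕ) : ℤ), (i : ℤ))) ^ 2) := by
        rw [Finset.card_range, Nat.cast_add, Nat.cast_one]
        gcongr with i hi
        have hij : (i : ℝ) + 1 ≤ j + 1 := by exact_mod_cast Finset.mem_range.1 hi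
        exact add_mul_sq_le (by positivity) ((div_le_one (by positivity)).2 (by linarith))
    _ = _ := by
        rw [← Finset.mul_sum]
        field_simp

/-- The lattice square with lower left corner `x` and side `J`. -/
def cornerSquare (x : Site) (J : ℕ) : Finset Site :=
  Finset.Icc x.1 (x.1 + J) ×ˢ Finset.Icc x.2 (x.2 + J)

lemma sum_triangle_le_sum_cornerSquare {g : Site → ℝ} (hg : ∀ z, 0 ≤ g z) (x : Site) (j₀ J : ℕ)
    {s : ℕ} (hs : s ≤ 1) :
    ∑ j ∈ Finset.Ico j₀ J, ∑ i ∈ Finset.range (j + 1), g (x + (((j + s : ℕ) : ℤ), (i : ℤ)))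
      ≤ ∑ z ∈ cornerSquare x J, g z := by
  rw [Finset.sum_sigma', ← Finset.sum_image (f := g)
    (g := fun p : (_ : ℕ) × ℕ => x + (((p.1 + s : ℕ) : ℤ), (p.2 : ℤ)))]
  · refine Finset.sum_le_sum_of_subset_of_nonneg (fun z hz => ?_) fun z _ _ => hg z
    simp only [Finset.mem_image, Finset.mem_sigma, Finset.mem_Ico, Finset.mem_range] at hz
    obtain ⟨p, ⟨hj, hi⟩, rfl⟩ := hz
    simp only [cornerSquare, Finset.mem_product, Finset.mem_Icc, Prod.fst_add, Prod.snd_add]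
    omega
  · rintro ⟨j, i⟩ _ ⟨j', i'⟩ _ h
    simp only [add_right_inj, Prod.mk.injEq, Nat.cast_inj, add_left_inj] at h
    obtain ⟨rfl, rfl⟩ := h
    rfl

lemma sq_segAvg_sub_le (f : Site → ℝ) (x : Site) {j₀ J : ℕ} (h : j₀ ≤ J) :
    (segAvg f x J - segAvg f x j₀) ^ 2 ≤ 2 * (∑ j ∈ Finset.Ico j₀ J, 1 / ((j : ℝ) + 1)) *
      ∑ z ∈ cornerSquare x J, gradSq f z := by
  rw [← Finset.sum_Ico_sub (segAvg f x) h, Finset.mul_sum (Finset.Ico j₀ J)]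
  refine (Finset.sum_sq_le_sum_mul_sum_of_sq_le_mul _ (fun j _ => by positivity)
    (fun j _ => Finset.sum_nonneg fun i _ => by positivity)
    fun j _ => sq_segAvg_succ_sub_le f x j).trans ?_
  refine mul_le_mul_of_nonneg_left ?_ (Finset.sum_nonneg fun j _ => by positivity)
  have hright := sum_triangle_le_sum_cornerSquare (fun z => sq_nonneg (edgeDiff (1, 0) f z))
    x j₀ J zero_le_one
  have hup := sum_triangle_le_sum_cornerSquare (fun z => sq_nonneg (edgeDiff (0, 1) f z))
    x j₀ J le_rfl
  simp only [add_zero] at hright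
  simp only [Finset.sum_add_distrib, gradSq]
  exact add_le_add hright hup

variable {n : ℕ} {f : Site → ℝ}

lemma segAvg_add_one_eq_zero (hf : ∀ x ∉ Lam n, f x = 0) {x : Site} (hx : x ∈ Lam n) :
    segAvg f x (n + 1) = 0 := by
  rw [segAvg, Finset.sum_eq_zero, zero_div]
  intro i _
  refine hf _ fun h => ?_
  rw [mem_Lam] at hx h
  have := le_abs_self (x.1 + ((n + 1 : ℕ) : ℤ))
  have := neg_abs_le x.1
  simp only [Prod.fst_add] at h
  push_cast at *
  omega

lemma sq_le_log_mul_energy (hf : ∀ x ∉ Lam n, f x = 0) (x : Site) :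
    f x ^ 2 ≤ 2 * (1 + log (n + 1)) * energy n f := by
  have hlog : 0 ≤ log ((n : ℝ) + 1) := log_nonneg (by simp)
  by_cases hx : x ∈ Lam n
  · have h := sq_segAvg_sub_le f x (Nat.zero_le (n + 1))
    rw [segAvg_add_one_eq_zero hf hx, segAvg_zero, zero_sub, neg_sq] at h
    have hsum := sum_Ico_zero_one_div_add_one_le_one_add_log n.succ_pos
    push_cast at hsum
    exact h.trans (mul_le_mul (by linarith) (sum_gradSq_le_energy hf _)
      (Finset.sum_nonneg fun z _ => gradSq_nonneg f z) (by positivity))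
  · have := energy_nonneg n f
    rw [hf x hx, zero_pow two_ne_zero]
    positivity

end SegmentAverages

section GridAverages

/-- The site of the grid `aℤ²` with index `p`. -/
def gridPt (a : ℕ) (p : ℕ × ℕ) : Site := ((p.1 : ℤ) * a, (p.2 : ℤ) * a)

/-- The index set `{0, …, m - 1}²`. -/
def gridIdx (m : ℕ) : Finset (ℕ × ℕ) := Finset.range m ×ˢ Finset.range m

lemma card_gridIdx (m : ℕ) : (gridIdx m).card = m ^ 2 := by simp [gridIdx, sq]

lemma card_filter_mem_segment_le {a : ℕ} (q m : ℕ) (ha : 1 ≤ a) (z : ℤ) :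
    ((Finset.range m).filter
      (fun k : ℕ => (k : ℤ) * a ≤ z ∧ z ≤ (k : ℤ) * a + (a * q : ℕ))).card ≤ q + 1 := by
  have hcard : (Finset.Icc (z / a - q) (z / a)).card = q + 1 := by
    rw [Int.card_Icc]
    omega
  rw [← hcard]
  refine Finset.card_le_card_of_injOn (fun k : ℕ => (k : ℤ)) (fun k hk => ?_)
    Nat.cast_injective.injOn
  have ha' : (0 : ℤ) < a := by exact_mod_cast ha
  obtain ⟨-, hlow, hup⟩ := Finset.mem_filter.1 hk
  have hdiv : z / a < k + q + 1 := by
    rw [Int.ediv_lt_iff_lt_mul ha']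
    push_cast at hup
    nlinarith
  rw [Finset.mem_coe, Finset.mem_Icc]
  exact ⟨by linarith, (Int.le_ediv_iff_mul_le ha').2 hlow⟩

lemma card_filter_mem_cornerSquare_le {a : ℕ} (q m : ℕ) (ha : 1 ≤ a) (z : Site) :
    ((gridIdx m).filter (fun p => z ∈ cornerSquare (gridPt a p) (a * q))).card ≤ (q + 1) ^ 2 := by
  have hsub : (gridIdx m).filter (fun p => z ∈ cornerSquare (gridPt a p) (a * q)) ⊆
      ((Finset.range m).filter
        (fun k : ℕ => (k : ℤ) * a ≤ z.1 ∧ z.1 ≤ (k : ℤ) * a + (a * q : ℕ))) ×ˢ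
      ((Finset.range m).filter
        (fun k : ℕ => (k : ℤ) * a ≤ z.2 ∧ z.2 ≤ (k : ℤ) * a + (a * q : ℕ))) := by
    intro p hp
    simp only [gridIdx, cornerSquare, gridPt, Finset.mem_filter, Finset.mem_product,
      Finset.mem_Icc] at hp ⊢
    tauto
  rw [sq]
  exact (Finset.card_le_card hsub).trans ((Finset.card_product _ _).trans_le
    (Nat.mul_le_mul (card_filter_mem_segment_le q m ha z.1)
      (card_filter_mem_segment_le q m ha z.2)))

variable {n : ℕ} {f : Site → ℝ}

lemma sum_sum_cornerSquare_gradSq_le (hf : ∀ x ∉ Lam n, f x = 0) {a : ℕ} (q m : ℕ) (ha : 1 ≤ a) :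
    ∑ p ∈ gridIdx m, ∑ z ∈ cornerSquare (gridPt a p) (a * q), gradSq f z ≤
      ((q : ℝ) + 1) ^ 2 * energy n f := by
  set T := (gridIdx m).biUnion fun p => cornerSquare (gridPt a p) (a * q)
  have hcomm : ∑ p ∈ gridIdx m, ∑ z ∈ cornerSquare (gridPt a p) (a * q), gradSq f z =
      ∑ z ∈ T, ∑ p ∈ gridIdx m with z ∈ cornerSquare (gridPt a p) (a * q), gradSq f z := by
    refine Finset.sum_comm' fun p z => ?_
    simp only [T, Finset.mem_filter, Finset.mem_biUnion]
    exact ⟨fun h => ⟨h, p, h⟩, fun h => h.1⟩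
  calc _ = ∑ z ∈ T, ∑ p ∈ gridIdx m with z ∈ cornerSquare (gridPt a p) (a * q), gradSq f z := hcomm
    _ ≤ ∑ z ∈ T, ((q : ℝ) + 1) ^ 2 * gradSq f z := by
        refine Finset.sum_le_sum fun z _ => ?_
        rw [Finset.sum_const, nsmul_eq_mul]
        refine mul_le_mul_of_nonneg_right ?_ (gradSq_nonneg f z)
        exact_mod_cast card_filter_mem_cornerSquare_le q m ha z
    _ ≤ ((q : ℝ) + 1) ^ 2 * energy n f := by
        rw [← Finset.mul_sum]
        exact mul_le_mul_of_nonneg_left (sum_gradSq_le_energy hf T) (by positivity)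

lemma sq_le_cornerSquare_add_energy (hf : ∀ x ∉ Lam n, f x = 0) {x : Site} (hx : x ∈ Lam n)
    {s : ℕ} (hs : 1 ≤ s) (hsn : s ≤ n + 1) :
    f x ^ 2 ≤ 4 * (1 + log (n + 1)) * ∑ z ∈ cornerSquare x s, gradSq f z +
      4 * (log (n + 1) - log s) * energy n f := by
  have hs0 : (0 : ℝ) < s := by exact_mod_cast hs
  have hlog : log s ≤ log (n + 1) := log_le_log hs0 (by exact_mod_cast hsn)
  have hsumnear := sum_Ico_zero_one_div_add_one_le_one_add_log hs
  have hsumfar := sum_Ico_one_div_add_one_le_log_sub_log hs hsn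
  push_cast at hsumfar
  have hsq0 (J : ℕ) : 0 ≤ ∑ z ∈ cornerSquare x J, gradSq f z :=
    Finset.sum_nonneg fun z _ => gradSq_nonneg f z
  have hnear : (segAvg f x s - f x) ^ 2 ≤
      2 * (1 + log (n + 1)) * ∑ z ∈ cornerSquare x s, gradSq f z := by
    have h := sq_segAvg_sub_le f x (Nat.zero_le s)
    rw [segAvg_zero] at h
    exact h.trans (mul_le_mul_of_nonneg_right (by linarith) (hsq0 s))
  have hfar : segAvg f x s ^ 2 ≤ 2 * (log (n + 1) - log s) * energy n f := by
    have h := sq_segAvg_sub_le f x hsn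
    rw [segAvg_add_one_eq_zero hf hx, zero_sub, neg_sq] at h
    exact h.trans (mul_le_mul (by linarith) (sum_gradSq_le_energy hf _) (hsq0 _) (by linarith))
  have := add_sq_le (a := f x - segAvg f x s) (b := segAvg f x s)
  rw [sub_add_cancel, sub_sq_comm] at this
  linarith

-- Beyond distance `a * q` the bound is uniform in the point; up to that distance each edge is
-- charged by at most `(q + 1)²` grid points.
lemma sum_sq_gridPt_le (hf : ∀ x ∉ Lam n, f x = 0) {a q m : ℕ}
    (ha : 1 ≤ a) (hq : 1 ≤ q) (haq : a * q ≤ n + 1) (hgrid : ∀ p ∈ gridIdx m, gridPt a p ∈ Lam n) :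
    ∑ p ∈ gridIdx m, f (gridPt a p) ^ 2 ≤
      (4 * (1 + log (n + 1)) * ((q : ℝ) + 1) ^ 2
        + 4 * (m : ℝ) ^ 2 * (log (n + 1) - log (a * q))) * energy n f := by
  have hpt (p) (hp : p ∈ gridIdx m) :=
    sq_le_cornerSquare_add_energy hf (hgrid p hp) (Nat.mul_pos ha hq) haq
  have hlog : 0 ≤ log ((n : ℝ) + 1) := log_nonneg (by simp)
  have hoverlap := mul_le_mul_of_nonneg_left (sum_sum_cornerSquare_gradSq_le hf q m ha)
    (show 0 ≤ 4 * (1 + log ((n : ℝ) + 1)) by positivity)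
  refine (Finset.sum_le_sum hpt).trans ?_
  rw [Finset.sum_add_distrib, ← Finset.mul_sum, Finset.sum_const, nsmul_eq_mul, card_gridIdx]
  push_cast
  linarith

end GridAverages

/-! ### A logarithmic cutoff function -/

section LogCutoff

/-- The sup-norm distance on `ℤ²`. -/
def supDist (c z : Site) : ℕ := max (z.1 - c.1).natAbs (z.2 - c.2).natAbs

/-- The radial profile `∑_{max t s ≤ j < R} 1/j ≈ log (R / max t s)`, constant for `t ≤ s` and zero
for `t ≥ R`. -/
def logProfile (s R t : ℕ) : ℝ := ∑ j ∈ Finset.Ico (max t s) R, 1 / (j : ℝ)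

/-- The logarithmic cutoff around `c` between the radii `s` and `R`; it witnesses the capacity of
the box of radius `s` inside the box of radius `R`. -/
def logCutoff (s R : ℕ) (c z : Site) : ℝ := logProfile s R (supDist c z)

lemma logCutoff_of_supDist_le {s R : ℕ} {c z : Site} (h : supDist c z ≤ s) :
    logCutoff s R c z = ∑ j ∈ Finset.Ico s R, 1 / (j : ℝ) := by
  rw [logCutoff, logProfile, max_eq_right h]

lemma logCutoff_of_le_supDist {s R : ℕ} {c z : Site} (h : R ≤ supDist c z) :
    logCutoff s R c z = 0 := by
  rw [logCutoff, logProfile, Finset.Ico_eq_empty_of_le (le_max_of_le_left h), Finset.sum_empty]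

lemma logProfile_sub_succ (s R t : ℕ) : logProfile s R t - logProfile s R (t + 1) =
    if s ≤ t ∧ t < R then 1 / (t : ℝ) else 0 := by
  unfold logProfile
  split_ifs with h
  · rw [max_eq_left h.1, max_eq_left (by omega), Finset.sum_eq_sum_Ico_succ_bot h.2,
      add_sub_cancel_right]
  · rcases not_and_or.1 h with hts | htR
    · rw [max_eq_right (by omega), max_eq_right (by omega), sub_self]
    · rw [Finset.Ico_eq_empty_of_le (by omega), Finset.Ico_eq_empty_of_le (by omega), sub_self]

lemma sq_logProfile_sub_le {s : ℕ} (hs : 1 ≤ s) (R : ℕ) {t u : ℕ} (htu : t ≤ u + 1)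
    (hut : u ≤ t + 1) :
    (logProfile s R t - logProfile s R u) ^ 2 ≤
      if t ∈ Finset.Icc s R then 4 / (t : ℝ) ^ 2 else 0 := by
  have hnn : (0 : ℝ) ≤ if t ∈ Finset.Icc s R then 4 / (t : ℝ) ^ 2 else 0 := by
    split_ifs <;> positivity
  rcases lt_trichotomy t u with h | rfl | h
  · obtain rfl : u = t + 1 := by omega
    rw [logProfile_sub_succ]
    by_cases ht : s ≤ t ∧ t < R
    · rw [if_pos ht, if_pos (Finset.mem_Icc.2 ⟨ht.1, ht.2.le⟩), div_pow]
      gcongr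
      norm_num
    · simpa [if_neg ht] using hnn
  · simpa using hnn
  · obtain rfl : t = u + 1 := by omega
    rw [sub_sq_comm, logProfile_sub_succ]
    by_cases hu : s ≤ u ∧ u < R
    · rw [if_pos hu, if_pos (Finset.mem_Icc.2 (by omega))]
      have hu1 : (1 : ℝ) ≤ u := by exact_mod_cast hs.trans hu.1
      push_cast
      rw [div_pow, div_le_div_iff₀ (by positivity) (by positivity)]
      nlinarith
    · simpa [if_neg hu] using hnn

lemma gradSq_logCutoff_le {s : ℕ} (hs : 1 ≤ s) (R : ℕ) (c z : Site) :
    gradSq (logCutoff s R c) z ≤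
      if supDist c z ∈ Finset.Icc s R then 8 / (supDist c z : ℝ) ^ 2 else 0 := by
  have hright := sq_logProfile_sub_le hs R (t := supDist c z) (u := supDist c (z + (1, 0)))
    (by simp only [supDist, Prod.fst_add, Prod.snd_add]; omega)
    (by simp only [supDist, Prod.fst_add, Prod.snd_add]; omega)
  have hup := sq_logProfile_sub_le hs R (t := supDist c z) (u := supDist c (z + (0, 1)))
    (by simp only [supDist, Prod.fst_add, Prod.snd_add]; omega)
    (by simp only [supDist, Prod.fst_add, Prod.snd_add]; omega)
  refine (add_le_add hright hup).trans_eq ?_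
  split_ifs <;> ring

lemma card_filter_supDist_eq_le (T : Finset Site) (c : Site) {t : ℕ} (ht : 1 ≤ t) :
    (T.filter (fun z => supDist c z = t)).card ≤ 12 * t := by
  have hsub : T.filter (fun z => supDist c z = t) ⊆
      (({c.1 + t, c.1 - t} : Finset ℤ) ×ˢ Finset.Icc (c.2 - t) (c.2 + t)) ∪
      (Finset.Icc (c.1 - t) (c.1 + t) ×ˢ ({c.2 + t, c.2 - t} : Finset ℤ)) := by
    intro z hz
    have hz := (Finset.mem_filter.1 hz).2
    simp only [supDist] at hz
    simp only [Finset.mem_union, Finset.mem_product, Finset.mem_insert, Finset.mem_singleton,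
      Finset.mem_Icc]
    omega
  refine (Finset.card_le_card hsub).trans ((Finset.card_union_le _ _).trans ?_)
  have hIcc (y : ℤ) : (Finset.Icc (y - t) (y + t)).card = 2 * t + 1 := by
    rw [Int.card_Icc]
    omega
  have hpair (y : ℤ) : ({y + t, y - t} : Finset ℤ).card ≤ 2 := Finset.card_le_two
  rw [Finset.card_product, Finset.card_product, hIcc, hIcc]
  nlinarith [hpair c.1, hpair c.2]

lemma energy_logCutoff_le_sum_Icc (n : ℕ) {s : ℕ} (hs : 1 ≤ s) (R : ℕ) (c : Site) :
    energy n (logCutoff s R c) ≤ 96 * ∑ t ∈ Finset.Icc s R, 1 / (t : ℝ) := by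
  set T := (Lam (n + 4)).filter fun z => supDist c z ∈ Finset.Icc s R
  have hmaps : ∀ z ∈ T, supDist c z ∈ Finset.Icc s R := fun z hz => (Finset.mem_filter.1 hz).2
  calc energy n (logCutoff s R c) ≤ ∑ z ∈ T, 8 / (supDist c z : ℝ) ^ 2 := by
        rw [Finset.sum_filter]
        exact Finset.sum_le_sum fun z _ => gradSq_logCutoff_le hs R c z
    _ = ∑ t ∈ Finset.Icc s R, ∑ z ∈ T with supDist c z = t, 8 / (supDist c z : ℝ) ^ 2 :=
        (Finset.sum_fiberwise_of_maps_to hmaps _).symm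
    _ ≤ ∑ t ∈ Finset.Icc s R, 96 * (1 / (t : ℝ)) := by
        refine Finset.sum_le_sum fun t ht => ?_
        have ht1 : 1 ≤ t := hs.trans (Finset.mem_Icc.1 ht).1
        have : (0 : ℝ) < t := by exact_mod_cast ht1
        have hcard : ((T.filter fun z => supDist c z = t).card : ℝ) ≤ 12 * t := by
          exact_mod_cast card_filter_supDist_eq_le T c ht1
        rw [Finset.sum_congr rfl fun z hz => by rw [(Finset.mem_filter.1 hz).2],
          Finset.sum_const, nsmul_eq_mul]
        refine (mul_le_mul_of_nonneg_right hcard (by positivity)).trans_eq ?_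
        field_simp
        norm_num
    _ = 96 * ∑ t ∈ Finset.Icc s R, 1 / (t : ℝ) := (Finset.mul_sum ..).symm

lemma energy_logCutoff_le (n : ℕ) {s R : ℕ} (hs : 1 ≤ s) (hR : s < R) (c : Site) :
    energy n (logCutoff s R c) ≤ 192 * ∑ j ∈ Finset.Ico s R, 1 / (j : ℝ) := by
  have hs0 : (0 : ℝ) < s := by exact_mod_cast hs
  have hlast : 1 / (R : ℝ) ≤ ∑ j ∈ Finset.Ico s R, 1 / (j : ℝ) :=
    calc 1 / (R : ℝ) ≤ 1 / (s : ℝ) := one_div_le_one_div_of_le hs0 (by exact_mod_cast hR.le)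
      _ ≤ ∑ j ∈ Finset.Ico s R, 1 / (j : ℝ) :=
        Finset.single_le_sum (f := fun j : ℕ => 1 / (j : ℝ)) (fun _ _ => by positivity)
          (Finset.left_mem_Ico.2 hR)
  have h := energy_logCutoff_le_sum_Icc n hs R c
  rw [← Finset.Ico_succ_right_eq_Icc, Order.succ_eq_add_one, Finset.sum_Ico_succ_top hR.le] at h
  linarith

end LogCutoff

/-! ### The Dirichlet space and its Green function -/

/-- The functions on `ℤ²` vanishing outside `Λ_n`. -/
def dirichletSubmodule (n : ℕ) : Submodule ℝ (Site → ℝ) where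
  carrier := {f | ∀ x ∉ Lam n, f x = 0}
  add_mem' hf hg x hx := by simp [hf x hx, hg x hx]
  zero_mem' _ _ := rfl
  smul_mem' r _ hf x hx := by simp [hf x hx]

/-- The functions on `ℤ²` vanishing outside `Λ_n`, as a Hilbert space for the Dirichlet inner
product `(1/(4π)) ∑_{x∼y} (f x - f y) (g x - g y)`. It is a type synonym, since the subtype already
carries the topology of pointwise convergence. -/
def DirichletSpace (n : ℕ) : Type := dirichletSubmodule n

namespace DirichletSpace

variable {n : ℕ}

instance : AddCommGroup (DirichletSpace n) := inferInstanceAs (AddCommGroup (dirichletSubmodule n))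

instance : Module ℝ (DirichletSpace n) := inferInstanceAs (Module ℝ (dirichletSubmodule n))

instance : FunLike (DirichletSpace n) Site ℝ where
  coe f := f.1
  coe_injective := Subtype.val_injective

/-- A function vanishing outside `Λ_n`, as an element of the Dirichlet space. -/
def ofFun (F : Site → ℝ) (hF : ∀ x ∉ Lam n, F x = 0) : DirichletSpace n :=
  (⟨F, hF⟩ : dirichletSubmodule n)

@[simp] lemma coe_ofFun (F : Site → ℝ) (hF : ∀ x ∉ Lam n, F x = 0) : ⇑(ofFun F hF) = F := rfl

@[simp] lemma add_apply (f g : DirichletSpace n) (x : Site) : (f + g) x = f x + g x := rfl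

@[simp] lemma smul_apply (r : ℝ) (f : DirichletSpace n) (x : Site) : (r • f) x = r * f x := rfl

@[simp] lemma zero_apply (x : Site) : (0 : DirichletSpace n) x = 0 := rfl

@[ext] lemma ext {f g : DirichletSpace n} (h : ∀ x, f x = g x) : f = g := DFunLike.ext f g h

lemma apply_eq_zero (f : DirichletSpace n) : ∀ x ∉ Lam n, f x = 0 := f.2

/-- Evaluation at a site, as a linear functional. -/
def evalₗ (x : Site) : DirichletSpace n →ₗ[ℝ] ℝ where
  toFun f := f x
  map_add' _ _ := rfl
  map_smul' _ _ := rfl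

instance : Module.Finite ℝ (DirichletSpace n) := by
  refine Module.Finite.of_injective (LinearMap.pi fun x : Lam n => evalₗ (n := n) x) fun f g h => ?_
  ext x
  by_cases hx : x ∈ Lam n
  · exact congrFun h ⟨x, hx⟩
  · rw [f.apply_eq_zero x hx, g.apply_eq_zero x hx]

/-- The polarization of `gradSq`. -/
def gradInner (f g : Site → ℝ) (z : Site) : ℝ :=
  edgeDiff (1, 0) f z * edgeDiff (1, 0) g z + edgeDiff (0, 1) f z * edgeDiff (0, 1) g z

lemma gradInner_self (f : Site → ℝ) (z : Site) : gradInner f f z = gradSq f z := by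
  rw [gradInner, gradSq, sq, sq]

/-- The Dirichlet inner product; the factor `1/(4π)` makes `‖f‖² / 2` the GFF Hamiltonian. -/
@[reducible] def innerCore (n : ℕ) : InnerProductSpace.Core ℝ (DirichletSpace n) where
  inner f g := (1 / (4 * π)) * ∑ x ∈ Lam (n + 4), gradInner f g x
  conj_inner_symm f g := by
    simp only [conj_trivial, gradInner, mul_comm]
  re_inner_nonneg f := by
    simp only [RCLike.re_to_real, gradInner_self]
    exact mul_nonneg (by positivity) (energy_nonneg n f)
  add_left f g h := by
    rw [← mul_add, ← Finset.sum_add_distrib]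
    congr 1
    refine Finset.sum_congr rfl fun x _ => ?_
    simp only [gradInner, edgeDiff, add_apply]
    ring
  smul_left f g r := by
    simp only [conj_trivial, Finset.mul_sum]
    refine Finset.sum_congr rfl fun x _ => ?_
    simp only [gradInner, edgeDiff, smul_apply]
    ring
  definite f h := by
    have henergy : energy n f = 0 := by
      simpa [gradInner_self, energy, pi_ne_zero] using h
    ext x
    have hx := sq_le_log_mul_energy f.apply_eq_zero x
    rw [henergy, mul_zero] at hx
    exact sq_nonpos_iff _ |>.1 hx

instance : NormedAddCommGroup (DirichletSpace n) := (innerCore n).toNormedAddCommGroup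

instance : InnerProductSpace ℝ (DirichletSpace n) := InnerProductSpace.ofCore (innerCore n).toCore

instance : MeasurableSpace (DirichletSpace n) := borel _

instance : BorelSpace (DirichletSpace n) := ⟨rfl⟩

instance : CompleteSpace (DirichletSpace n) := FiniteDimensional.complete ℝ _

lemma inner_def (f g : DirichletSpace n) :
    inner ℝ f g = (1 / (4 * π)) * ∑ x ∈ Lam (n + 4), gradInner f g x := rfl

lemma norm_sq_eq (f : DirichletSpace n) : ‖f‖ ^ 2 = (1 / (4 * π)) * energy n f := by
  simp only [← real_inner_self_eq_norm_sq, inner_def, gradInner_self, energy]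

/-- The Green function with pole at `x`: the Riesz representative of evaluation at `x`. -/
def green (n : ℕ) (x : Site) : DirichletSpace n :=
  (InnerProductSpace.toDual ℝ (DirichletSpace n)).symm (evalₗ x).toContinuousLinearMap

lemma inner_green (x : Site) (f : DirichletSpace n) : inner ℝ (green n x) f = f x := by
  rw [green, InnerProductSpace.toDual_symm_apply]
  rfl

/-- The span of the Green functions with poles in `K`; its orthogonal complement consists of the
functions vanishing on `K`. -/
def greenSpan (n : ℕ) (K : Set Site) : Submodule ℝ (DirichletSpace n) :=
  Submodule.span ℝ (green n '' K)

/-- The orthogonal projection of `green n c` on the span of the Green functions with poles in `K`.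
It represents the value at `c` of the harmonic extension from `K`. -/
def greenProj (n : ℕ) (K : Set Site) (c : Site) : DirichletSpace n :=
  (greenSpan n K).starProjection (green n c)

variable {K : Set Site} {c : Site}

lemma green_mem_greenSpan (hc : c ∈ K) : green n c ∈ greenSpan n K :=
  Submodule.subset_span ⟨c, hc, rfl⟩

lemma greenProj_mem_greenSpan : greenProj n K c ∈ greenSpan n K :=
  Submodule.starProjection_apply_mem _ _

lemma inner_greenProj_greenProj (K : Set Site) (c d : Site) :
    inner ℝ (greenProj n K c) (greenProj n K d) = greenProj n K c d := by
  have h : inner ℝ (green n d - greenProj n K d) (greenProj n K c) = 0 :=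
    Submodule.starProjection_inner_eq_zero _ _ greenProj_mem_greenSpan
  rw [inner_sub_left, inner_green, sub_eq_zero] at h
  rw [h, real_inner_comm]

lemma inner_eq_zero_of_mem_greenSpan {f g : DirichletSpace n} (hf : f ∈ greenSpan n K)
    (hg : ∀ y ∈ K, g y = 0) : inner ℝ f g = 0 := by
  have hle : greenSpan n K ≤ (Submodule.span ℝ {g})ᗮ := by
    rw [greenSpan, Submodule.span_le]
    rintro _ ⟨y, hy, rfl⟩
    rw [SetLike.mem_coe, Submodule.mem_orthogonal_singleton_iff_inner_left, inner_green, hg y hy]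
  exact Submodule.mem_orthogonal_singleton_iff_inner_left.1 (hle hf)

lemma green_sub_greenProj_apply_of_mem {y : Site} (hy : y ∈ K) :
    (green n c - greenProj n K c) y = 0 := by
  rw [← inner_green, real_inner_comm]
  exact Submodule.starProjection_inner_eq_zero _ _ (green_mem_greenSpan hy)

lemma inner_green_sub_greenProj {g : DirichletSpace n} (hg : ∀ y ∈ K, g y = 0) :
    inner ℝ (green n c - greenProj n K c) g = g c := by
  rw [inner_sub_left, inner_green,
    inner_eq_zero_of_mem_greenSpan greenProj_mem_greenSpan hg, sub_zero]

/-! ### Locality of the Dirichlet inner product -/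

variable {a : ℤ}

lemma boxAt_edge_trichotomy (ha : Even a) (c z : Site) {e : Site} (he : e = (1, 0) ∨ e = (0, 1)) :
    (z ∈ boxAt a c ↔ z + e ∈ boxAt a c) ∨
      (z ∈ innerBdryAt a c ∧ z + e ∉ boxAt a c) ∨ (z + e ∈ innerBdryAt a c ∧ z ∉ boxAt a c) := by
  obtain ⟨b, rfl⟩ := ha
  simp only [innerBdryAt, boxAt, Set.mem_ofPred_eq, Int.abs_eq_natAbs]
  rcases he with rfl | rfl <;> simp only [Prod.fst_add, Prod.snd_add, add_zero] <;> omega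

lemma inner_eq_zero_of_const_on_boxAt (ha : Even a) {f g : DirichletSpace n} {v : ℝ}
    (hbdry : ∀ z ∈ innerBdryAt a c, f z = 0) (hout : ∀ z ∉ boxAt a c, f z = 0)
    (hg : ∀ z ∈ boxAt a c, g z = v) : inner ℝ f g = 0 := by
  have hedge (z e : Site) (he : e = (1, 0) ∨ e = (0, 1)) : edgeDiff e f z * edgeDiff e g z = 0 := by
    simp only [edgeDiff]
    rcases boxAt_edge_trichotomy ha c z he with h | ⟨h, h'⟩ | ⟨h, h'⟩
    · by_cases hz : z ∈ boxAt a c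
      · rw [hg z hz, hg _ (h.1 hz), sub_self, mul_zero]
      · rw [hout z hz, hout _ (mt h.2 hz), sub_self, zero_mul]
    · rw [hbdry z h, hout _ h', sub_self, zero_mul]
    · rw [hbdry _ h, hout z h', sub_self, zero_mul]
  rw [inner_def, Finset.sum_eq_zero, mul_zero]
  intro z _
  rw [gradInner, hedge z _ (Or.inl rfl), hedge z _ (Or.inr rfl), add_zero]

/-- The restriction of `f` to `S`, extended by zero. -/
def restrict (S : Set Site) (f : DirichletSpace n) : DirichletSpace n :=
  ofFun (S.indicator f) fun x hx => by simp [Set.indicator_apply, f.apply_eq_zero x hx]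

lemma restrict_add_restrict_compl (S : Set Site) (f : DirichletSpace n) :
    restrict S f + restrict Sᶜ f = f :=
  ext fun x => congrFun (Set.indicator_self_add_compl S f) x

lemma mem_boxAt_self (ha : 0 ≤ a) (c : Site) : c ∈ boxAt a c := by simp [boxAt, ha]

lemma green_sub_greenProj_apply_of_notMem_boxAt (ha : Even a) (ha0 : 0 ≤ a)
    (hK : innerBdryAt a c ⊆ K) {z : Site} (hz : z ∉ boxAt a c) :
    (green n c - greenProj n K c) z = 0 := by
  set q := green n c - greenProj n K c
  have hqK (y) (hy : y ∈ K) : q y = 0 := green_sub_greenProj_apply_of_mem hy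
  have hcross : inner ℝ (restrict (boxAt a c) q) (restrict (boxAt a c)ᶜ q) = 0 :=
    inner_eq_zero_of_const_on_boxAt ha (c := c) (v := 0)
      (fun y hy => by simp [restrict, Set.indicator_apply, hqK y (hK hy)])
      (fun y hy => by simp [restrict, hy]) (fun y hy => by simp [restrict, hy])
  have hself : inner ℝ q (restrict (boxAt a c)ᶜ q) = 0 := by
    rw [inner_green_sub_greenProj fun y hy => by simp [restrict, Set.indicator_apply, hqK y hy]]
    simp [restrict, mem_boxAt_self ha0 c]
  nth_rw 1 [← restrict_add_restrict_compl (boxAt a c) q] at hself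
  rw [inner_add_left, hcross, zero_add, inner_self_eq_zero] at hself
  simpa [restrict, hz] using DFunLike.congr_fun hself z

lemma inner_greenProj_of_const_on_boxAt (ha : Even a) (ha0 : 0 ≤ a) (hK : innerBdryAt a c ⊆ K)
    {g : DirichletSpace n} (hg : ∀ z ∈ boxAt a c, g z = g c) :
    inner ℝ (greenProj n K c) g = g c := by
  have h := inner_eq_zero_of_const_on_boxAt (n := n) ha
    (fun z hz => green_sub_greenProj_apply_of_mem (c := c) (hK hz))
    (fun z hz => green_sub_greenProj_apply_of_notMem_boxAt ha ha0 hK hz) hg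
  rw [inner_sub_left, inner_green, sub_eq_zero] at h
  exact h.symm

-- Testing the projected Green function against the logarithmic cutoff bounds its energy below.
lemma log_sub_log_div_le_norm_sq_greenProj {a R : ℕ} (ha : Even a) (ha0 : 1 ≤ a) (haR : a < R)
    (hc : ∀ x, supDist c x < R → x ∈ Lam n) (hK : innerBdryAt (a : ℤ) c ⊆ K) :
    (log R - log a) / 16 ≤ ‖greenProj n K c‖ ^ 2 := by
  set H : ℝ := ∑ j ∈ Finset.Ico a R, 1 / (j : ℝ)
  have hH : log R - log a ≤ H := log_sub_log_le_sum_Ico_one_div ha0 haR.le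
  have hH0 : 0 < H := hH.trans_lt' <| sub_pos.2 <|
    log_lt_log (by exact_mod_cast ha0) (by exact_mod_cast haR)
  set F : DirichletSpace n := ofFun (logCutoff a R c)
    fun x hx => logCutoff_of_le_supDist (not_lt.1 (mt (hc x) hx))
  have hF (z) (hz : z ∈ boxAt (a : ℤ) c) : F z = H := by
    refine logCutoff_of_supDist_le ?_
    simp only [boxAt, Set.mem_ofPred_eq, Int.abs_eq_natAbs] at hz
    unfold supDist
    omega
  have hFc : F c = H := hF c (mem_boxAt_self (by positivity) c)
  have hinner : inner ℝ (greenProj n K c) F = H := by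
    rw [inner_greenProj_of_const_on_boxAt ((Int.even_coe_nat a).2 ha) (by positivity) hK, hFc]
    intro z hz
    rw [hF z hz, hFc]
  have hFnorm : ‖F‖ ^ 2 ≤ 16 * H := by
    rw [norm_sq_eq, div_mul_eq_mul_div, one_mul, div_le_iff₀ (by positivity)]
    refine (energy_logCutoff_le n ha0 haR c).trans ?_
    nlinarith [pi_gt_three]
  have hcs : H * H ≤ ‖greenProj n K c‖ ^ 2 * 16 * H := by
    rw [← sq, mul_assoc]
    calc H ^ 2 ≤ (‖greenProj n K c‖ * ‖F‖) ^ 2 :=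
          pow_le_pow_left₀ hH0.le (hinner ▸ real_inner_le_norm _ _) 2
      _ = ‖greenProj n K c‖ ^ 2 * ‖F‖ ^ 2 := mul_pow ..
      _ ≤ _ := by gcongr
  linarith [le_of_mul_le_mul_right hcs hH0]

end DirichletSpace

/-! ### Gaussian measures and isonormal processes -/

section Gaussian

open ProbabilityTheory

open scoped Topology

section Density

variable {E : Type*} [NormedAddCommGroup E]

/-- The density of the standard Gaussian measure on `E`, up to the normalizing constant. -/
def gaussDensity (v : E) : ℝ≥0∞ := ENNReal.ofReal (exp (-(‖v‖ ^ 2 / 2)))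

lemma gaussDensity_ne_zero (v : E) : gaussDensity v ≠ 0 := by simp [gaussDensity, exp_pos]

variable [MeasurableSpace E] [BorelSpace E]

lemma measurable_gaussDensity : Measurable (gaussDensity (E := E)) := by
  unfold gaussDensity
  fun_prop

variable [InnerProductSpace ℝ E] [FiniteDimensional ℝ E]

variable (E) in
lemma withDensity_gaussDensity_univ_ne_top :
    (volume : Measure E).withDensity gaussDensity Set.univ ≠ ∞ := by
  have hint : Integrable (fun v : E => exp (-(‖v‖ ^ 2 / 2))) := by
    refine (GaussianFourier.integrable_cexp_neg_mul_sq_norm_add (V := E) (b := (1 / 2 : ℂ))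
      (by norm_num) 0 (0 : E)).re.congr (.of_forall fun v => ?_)
    have hreal : -(1 / 2 : ℂ) * (‖v‖ : ℂ) ^ 2 = ((-(‖v‖ ^ 2 / 2) : ℝ) : ℂ) := by push_cast; ring
    simp only [zero_mul, add_zero, hreal, ← Complex.ofReal_exp]
    exact Complex.ofReal_re _
  rw [withDensity_apply _ MeasurableSet.univ, Measure.restrict_univ]
  exact hint.lintegral_lt_top.ne

variable (E) in
lemma withDensity_gaussDensity_univ_ne_zero :
    (volume : Measure E).withDensity gaussDensity Set.univ ≠ 0 := by
  intro h
  have hvol := withDensity_absolutelyContinuous' measurable_gaussDensity.aemeasurable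
    (.of_forall gaussDensity_ne_zero) h
  exact NeZero.ne _ (Measure.measure_univ_eq_zero.1 hvol)

lemma charFun_smul_withDensity_gaussDensity (r : ℝ≥0∞) (t : E) :
    charFun (r • (volume : Measure E).withDensity gaussDensity) t =
      r.toReal * ((π : ℂ) / (1 / 2 : ℂ)) ^ ((Module.finrank ℝ E : ℂ) / 2) *
        Complex.exp (-‖t‖ ^ 2 / 2) := by
  have hfourier := GaussianFourier.integral_cexp_neg_mul_sq_norm_add (V := E) (b := (1 / 2 : ℂ))
    (by norm_num) Complex.I t
  have hexp : Complex.I ^ 2 * (‖t‖ : ℂ) ^ 2 / (4 * (1 / 2)) = -(‖t‖ : ℂ) ^ 2 / 2 := by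
    rw [Complex.I_sq]; ring
  rw [hexp] at hfourier
  rw [charFun_apply, integral_smul_measure, integral_withDensity_eq_integral_toReal_smul
    measurable_gaussDensity (.of_forall fun x => by simp [gaussDensity]), Complex.real_smul,
    mul_assoc, ← hfourier]
  congr 2 with v
  rw [gaussDensity, ENNReal.toReal_ofReal (exp_pos _).le, Complex.real_smul, Complex.ofReal_exp,
    ← Complex.exp_add, real_inner_comm]
  push_cast
  ring_nf

lemma inv_smul_volume_withDensity_gaussDensity :
    ((volume : Measure E).withDensity gaussDensity Set.univ)⁻¹ •
      (volume : Measure E).withDensity gaussDensity = stdGaussian E := by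
  set μ := (volume : Measure E).withDensity gaussDensity
  have : IsProbabilityMeasure ((μ Set.univ)⁻¹ • μ) := ⟨by
    rw [Measure.smul_apply, smul_eq_mul, ENNReal.inv_mul_cancel
      (withDensity_gaussDensity_univ_ne_zero E) (withDensity_gaussDensity_univ_ne_top E)]⟩
  have hconst := charFun_smul_withDensity_gaussDensity (μ Set.univ)⁻¹ (0 : E)
  simp only [norm_zero, ne_eq, OfNat.ofNat_ne_zero, not_false_eq_true, Complex.ofReal_zero,
    zero_pow, neg_zero, zero_div, Complex.exp_zero, mul_one] at hconst
  refine Measure.ext_of_charFun (funext fun t => ?_)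
  rw [charFun_smul_withDensity_gaussDensity, ← hconst, charFun_zero, charFun_stdGaussian]
  simp

lemma inv_smul_withDensity_gaussDensity (ν : Measure E) [ν.IsAddHaarMeasure] :
    (ν.withDensity gaussDensity Set.univ)⁻¹ • ν.withDensity gaussDensity = stdGaussian E := by
  set c : ℝ≥0∞ := ENNReal.ofNNReal (Measure.addHaarScalarFactor ν (volume : Measure E))
  have hν : ν = c • (volume : Measure E) := Measure.isAddLeftInvariant_eq_smul ν volume
  have hc : c ≠ 0 :=
    ENNReal.coe_ne_zero.2 (Measure.addHaarScalarFactor_pos_of_isAddHaarMeasure ν volume).ne'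
  rw [← inv_smul_volume_withDensity_gaussDensity, hν, withDensity_smul_measure,
    Measure.smul_apply, smul_smul, smul_eq_mul, ENNReal.mul_inv (.inl hc) (.inl (by simp [c])),
    mul_right_comm, ENNReal.inv_mul_cancel hc (by simp [c]), one_mul]

lemma stdGaussian_absolutelyContinuous : stdGaussian E ≪ volume := by
  rw [← inv_smul_volume_withDensity_gaussDensity]
  exact (withDensity_absolutelyContinuous _ _).smul_left _

lemma absolutelyContinuous_stdGaussian : volume ≪ stdGaussian E := by
  rw [← inv_smul_volume_withDensity_gaussDensity]
  exact (withDensity_absolutelyContinuous' measurable_gaussDensity.aemeasurable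
    (.of_forall gaussDensity_ne_zero)).trans (Measure.absolutelyContinuous_smul
      (ENNReal.inv_ne_zero.2 (withDensity_gaussDensity_univ_ne_top E)))

end Density

section LinearImage

open ContinuousLinearMap

variable {E F G ι : Type*} [Fintype ι]
  [NormedAddCommGroup E] [InnerProductSpace ℝ E] [FiniteDimensional ℝ E]
  [NormedAddCommGroup F] [InnerProductSpace ℝ F]
  [NormedAddCommGroup G] [InnerProductSpace ℝ G] [FiniteDimensional ℝ G]

variable (ι) in
/-- The linear map applying `T` to each of the components of a family indexed by `ι`. -/
def coordMap (T : E →L[ℝ] F) : PiLp 2 (fun _ : ι => E) →L[ℝ] PiLp 2 (fun _ : ι => F) :=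
  LinearMap.toContinuousLinearMap
    { toFun g := WithLp.toLp 2 fun i => T (g i)
      map_add' g h := by ext i; simp
      map_smul' c g := by ext i; simp }

lemma coordMap_apply (T : E →L[ℝ] F) (g : PiLp 2 (fun _ : ι => E)) (i : ι) :
    coordMap ι T g i = T (g i) := rfl

variable (ι) in
/-- The `ℝ^ι`-valued isonormal process over `E`: evaluated at a standard Gaussian vector `g`,
its components are independent copies of the centered Gaussian process indexed by `f : E`
whose covariance is the inner product of `E`. -/
def isonormal (f : E) : PiLp 2 (fun _ : ι => E) →L[ℝ] EuclideanSpace ℝ ι :=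
  coordMap ι (innerSL ℝ f)

lemma isonormal_apply (f : E) (g : PiLp 2 (fun _ : ι => E)) (i : ι) :
    isonormal ι f g i = inner ℝ f (g i) := rfl

lemma isonormal_add (f g : E) : isonormal ι (f + g) = isonormal ι f + isonormal ι g := by
  ext h i
  simp [isonormal_apply, inner_add_left]

lemma isonormal_sub (f g : E) : isonormal ι (f - g) = isonormal ι f - isonormal ι g := by
  ext h i
  simp [isonormal_apply, inner_sub_left]

lemma isonormal_smul (c : ℝ) (f : E) : isonormal ι (c • f) = c • isonormal ι f := by
  ext h i
  simp [isonormal_apply, inner_smul_left]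

variable [FiniteDimensional ℝ F]

lemma adjoint_coordMap (T : E →L[ℝ] F) : adjoint (coordMap ι T) = coordMap ι (adjoint T) := by
  refine ((eq_adjoint_iff _ _).2 fun x y => ?_).symm
  simp only [PiLp.inner_apply, coordMap_apply, adjoint_inner_left]

lemma isonormal_coordMap (f : F) (T : E →L[ℝ] F) (g : PiLp 2 fun _ : ι => E) :
    isonormal ι f (coordMap ι T g) = isonormal ι (adjoint T f) g := by
  ext i
  simp [isonormal_apply, coordMap_apply, adjoint_inner_left]

variable [MeasurableSpace E] [BorelSpace E] [MeasurableSpace F] [BorelSpace F]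
  [MeasurableSpace G] [BorelSpace G]

lemma map_stdGaussian_of_comp_adjoint_eq_id {L : E →L[ℝ] F}
    (hL : L ∘L adjoint L = ContinuousLinearMap.id ℝ F) :
    (stdGaussian E).map L = stdGaussian F := by
  refine Measure.ext_of_charFun (funext fun t => ?_)
  have hnorm : ‖adjoint L t‖ = ‖t‖ := by
    have : ‖adjoint L t‖ ^ 2 = ‖t‖ ^ 2 := by
      rw [← real_inner_self_eq_norm_sq, adjoint_inner_left, ← comp_apply, hL, id_apply,
        real_inner_self_eq_norm_sq]
    exact (sq_eq_sq₀ (norm_nonneg _) (norm_nonneg _)).1 this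
  rw [charFun_apply, integral_map L.continuous.measurable.aemeasurable (by fun_prop),
    charFun_stdGaussian, ← hnorm, ← charFun_stdGaussian, charFun_apply]
  simp only [adjoint_inner_right]

lemma indepFun_stdGaussian_of_comp_adjoint_eq_zero {L : E →L[ℝ] F} {M : E →L[ℝ] G}
    (h : M ∘L adjoint L = 0) : IndepFun L M (stdGaussian E) := by
  have hjoint : HasGaussianLaw (fun ω => (L ω, M ω)) (stdGaussian E) :=
    (IsGaussian.hasGaussianLaw_id (μ := stdGaussian E)).map (L.prod M)
  refine hjoint.indepFun_of_covariance_inner fun x y => ?_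
  simp only [← adjoint_inner_left]
  rw [← covarianceBilin_apply_eq_cov IsGaussian.memLp_two_id, covarianceBilin_stdGaussian]
  change inner ℝ (adjoint L x) (adjoint M y) = 0
  rw [adjoint_inner_right, ← comp_apply, h, zero_apply, inner_zero_left]

lemma map_coordMap_stdGaussian {T : E →L[ℝ] F}
    (hT : T ∘L adjoint T = ContinuousLinearMap.id ℝ F) :
    (stdGaussian (PiLp 2 fun _ : ι => E)).map (coordMap ι T) =
      stdGaussian (PiLp 2 fun _ : ι => F) := by
  refine map_stdGaussian_of_comp_adjoint_eq_id ?_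
  ext g i
  rw [adjoint_coordMap]
  exact congr($hT (g i))

lemma indepFun_coordMap {T : E →L[ℝ] F} {S : E →L[ℝ] G} (h : S ∘L adjoint T = 0) :
    IndepFun (coordMap ι T) (coordMap ι S) (stdGaussian (PiLp 2 fun _ : ι => E)) := by
  refine indepFun_stdGaussian_of_comp_adjoint_eq_zero ?_
  ext g i
  rw [adjoint_coordMap]
  exact congr($h (g i))

lemma map_isonormal_stdGaussian {f : E} (hf : ‖f‖ = 1) :
    (stdGaussian (PiLp 2 fun _ : ι => E)).map (isonormal ι f) =
      stdGaussian (EuclideanSpace ℝ ι) :=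
  map_coordMap_stdGaussian (by ext; simp [adjoint_innerSL_apply, hf])

lemma indepFun_isonormal {f g : E} (hfg : inner ℝ f g = 0) :
    IndepFun (isonormal ι f) (isonormal ι g) (stdGaussian (PiLp 2 fun _ : ι => E)) :=
  indepFun_coordMap (by ext; simp [adjoint_innerSL_apply, real_inner_comm, hfg])

lemma indepFun_isonormal_coordMap {f : E} {S : E →L[ℝ] F} (hf : S f = 0) :
    IndepFun (isonormal ι f) (coordMap ι S) (stdGaussian (PiLp 2 fun _ : ι => E)) :=
  indepFun_coordMap (by ext; simp [adjoint_innerSL_apply, hf])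

end LinearImage

section OrthantProbability

/-- Vectors with positive coordinates, as a convex cone. -/
def posOrthant (ι : Type*) : ConvexCone ℝ (EuclideanSpace ℝ ι) where
  carrier := {s | ∀ i, 0 < s i}
  smul_mem' _ hc _ hs i := mul_pos hc (hs i)
  add_mem' _ hs _ ht i := add_pos (hs i) (ht i)

lemma nonempty_posOrthant (ι : Type*) : (posOrthant ι : Set (EuclideanSpace ℝ ι)).Nonempty :=
  ⟨WithLp.toLp 2 fun _ => 1, fun _ => one_pos⟩

lemma isOpen_posOrthant (ι : Type*) [Finite ι] :
    IsOpen (posOrthant ι : Set (EuclideanSpace ℝ ι)) := by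
  have : (posOrthant ι : Set (EuclideanSpace ℝ ι)) = ⋂ i, {s | 0 < s i} := by
    ext s
    rw [Set.mem_iInter]
    rfl
  rw [this]
  exact isOpen_iInter_of_finite fun i => isOpen_lt continuous_const (by fun_prop)

variable {E : Type*} [NormedAddCommGroup E] [InnerProductSpace ℝ E]

lemma exists_smul_add_smul_orthonormal {f g : E} (hf : ‖f‖ = 1) (hg : ‖g‖ = 1)
    (hfg : |inner ℝ f g| < 1) :
    ∃ w : E, ‖w‖ = 1 ∧ inner ℝ f w = 0 ∧
      g = (inner ℝ f g : ℝ) • f + √(1 - (inner ℝ f g : ℝ) ^ 2) • w := by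
  set ρ : ℝ := inner ℝ f g with hρ
  have hpos : 0 < 1 - ρ ^ 2 := sub_pos.2 ((sq_lt_one_iff_abs_lt_one ρ).2 hfg)
  set σ := √(1 - ρ ^ 2)
  have hσ : 0 < σ := sqrt_pos.2 hpos
  have hnorm : ‖g - ρ • f‖ ^ 2 = σ ^ 2 := by
    rw [norm_sub_sq_real, norm_smul, hf, hg, inner_smul_right, real_inner_comm, ← hρ,
      sq_sqrt hpos.le, mul_one, norm_eq_abs, sq_abs]
    ring
  refine ⟨σ⁻¹ • (g - ρ • f), ?_, ?_, ?_⟩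
  · rw [norm_smul, (sq_eq_sq₀ (norm_nonneg _) hσ.le).1 hnorm, norm_inv, norm_of_nonneg hσ.le,
      inv_mul_cancel₀ hσ.ne']
  · rw [inner_smul_right, inner_sub_right, inner_smul_right, real_inner_self_eq_norm_sq, hf, ← hρ]
    ring
  · rw [smul_inv_smul₀ hσ.ne', add_sub_cancel]

variable [FiniteDimensional ℝ E] [MeasurableSpace E] [BorelSpace E]

/-- The probability that both vectors of a pair of standard Gaussian vectors with
cross-covariance `ρ • id` lie in `C`. -/
def jointProb (C : Set E) (ρ : ℝ) : ℝ :=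
  ((stdGaussian E).prod (stdGaussian E)).real {z | z.1 ∈ C ∧ ρ • z.1 + √(1 - ρ ^ 2) • z.2 ∈ C}

lemma eventually_mem_iff_of_notMem_frontier {X Y : Type*} [TopologicalSpace Y] {l : Filter X}
    {f : X → Y} {y : Y} {C : Set Y} (hf : Tendsto f l (𝓝 y)) (hy : y ∉ frontier C) :
    ∀ᶠ x in l, f x ∈ C ↔ y ∈ C := by
  rw [frontier, Set.mem_sdiff, not_and_not_right] at hy
  by_cases hyC : y ∈ closure C
  · filter_upwards [hf (mem_interior_iff_mem_nhds.1 (hy hyC))] with x hx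
    exact iff_of_true hx (interior_subset (hy hyC))
  · filter_upwards [hf (isClosed_closure.isOpen_compl.mem_nhds hyC)] with x hx
    exact iff_of_false (fun h => hx (subset_closure h)) (fun h => hyC (subset_closure h))

lemma measurableSet_jointProb {C : Set E} (hC : MeasurableSet C) (ρ σ : ℝ) :
    MeasurableSet {z : E × E | z.1 ∈ C ∧ ρ • z.1 + σ • z.2 ∈ C} := by
  have hlin : Measurable fun z : E × E => ρ • z.1 + σ • z.2 := by fun_prop
  exact (measurable_fst hC).inter (hlin hC)

lemma tendsto_jointProb {C : Set E} (hC : MeasurableSet C) (hconv : Convex ℝ C) :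
    Tendsto (jointProb C) (𝓝 0) (𝓝 ((stdGaussian E).real C ^ 2)) := by
  have hprod : (stdGaussian E).real C ^ 2 =
      (((stdGaussian E).prod (stdGaussian E)) (C ×ˢ C)).toReal := by
    rw [Measure.prod_prod, ENNReal.toReal_mul, ← measureReal_def, sq]
  rw [hprod]
  refine (ENNReal.tendsto_toReal (measure_ne_top _ _)).comp
    (tendsto_measure_of_ae_tendsto_indicator_of_isFiniteMeasure _ (hC.prod hC)
      (fun ρ => measurableSet_jointProb hC ρ _) ?_)
  have hfrontier : ∀ᵐ y ∂stdGaussian E, y ∉ frontier C := measure_eq_zero_iff_ae_notMem.1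
    (stdGaussian_absolutelyContinuous (hconv.addHaar_frontier volume))
  filter_upwards [Measure.quasiMeasurePreserving_snd.ae hfrontier] with z hz
  have hlim : Tendsto (fun ρ : ℝ => ρ • z.1 + √(1 - ρ ^ 2) • z.2) (𝓝 0) (𝓝 z.2) := by
    have hcont : Continuous fun ρ : ℝ => ρ • z.1 + √(1 - ρ ^ 2) • z.2 := by fun_prop
    simpa using hcont.tendsto 0
  filter_upwards [eventually_mem_iff_of_notMem_frontier hlim hz] with ρ hρ
  exact and_congr_right' hρ

variable {ι : Type*} [Fintype ι]

lemma real_isonormal_mem_inter_eq_jointProb {f g : E} (hf : ‖f‖ = 1) (hg : ‖g‖ = 1)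
    (hfg : |inner ℝ f g| < 1) {C : Set (EuclideanSpace ℝ ι)} (hC : MeasurableSet C) :
    (stdGaussian (PiLp 2 fun _ : ι => E)).real (isonormal ι f ⁻¹' C ∩ isonormal ι g ⁻¹' C) =
      jointProb C (inner ℝ f g) := by
  obtain ⟨w, hw, hfw, hgw⟩ := exists_smul_add_smul_orthonormal hf hg hfg
  have hlaw := (indepFun_iff_map_prod_eq_prod_map_map
    (isonormal ι f).continuous.measurable.aemeasurable
    (isonormal ι w).continuous.measurable.aemeasurable).1 (indepFun_isonormal hfw)
  rw [map_isonormal_stdGaussian hf, map_isonormal_stdGaussian hw] at hlaw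
  rw [jointProb, ← hlaw, map_measureReal_apply (by fun_prop) (measurableSet_jointProb hC _ _)]
  nth_rw 1 [hgw]
  rw [isonormal_add, isonormal_smul, isonormal_smul]
  rfl

lemma stdGaussian_real_pos {C : Set E} (hC : IsOpen C) (hne : C.Nonempty) :
    0 < (stdGaussian E).real C :=
  ENNReal.toReal_pos (fun h => (hC.measure_pos volume hne).ne' (absolutelyContinuous_stdGaussian h))
    (measure_ne_top _ _)

end OrthantProbability

section SecondMoment

lemma card_filter_mem_eq_sum_indicator {Ω ι : Type*} (S : Finset ι) (A : ι → Set Ω) (ω : Ω) :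
    ((S.filter (ω ∈ A ·)).card : ℝ) = ∑ i ∈ S, (A i).indicator 1 ω := by
  simp [Set.indicator_apply]

variable {Ω ι : Type*} [MeasurableSpace Ω] {μ : Measure Ω} [IsProbabilityMeasure μ]
  {S : Finset ι} {A : ι → Set Ω}

lemma memLp_card_filter_mem (hA : ∀ i, MeasurableSet (A i)) :
    MemLp (fun ω => ((S.filter (ω ∈ A ·)).card : ℝ)) 2 μ := by
  simp only [card_filter_mem_eq_sum_indicator]
  exact memLp_finsetSum _ fun i _ => (memLp_const 1).indicator (hA i)

lemma integral_card_filter_mem (hA : ∀ i, MeasurableSet (A i)) :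
    ∫ ω, ((S.filter (ω ∈ A ·)).card : ℝ) ∂μ = ∑ i ∈ S, μ.real (A i) := by
  simp only [card_filter_mem_eq_sum_indicator]
  rw [integral_finsetSum _ fun i _ => (integrable_const 1).indicator (hA i)]
  exact Finset.sum_congr rfl fun i _ => integral_indicator_one (hA i)

lemma integral_card_filter_mem_sq (hA : ∀ i, MeasurableSet (A i)) :
    ∫ ω, ((S.filter (ω ∈ A ·)).card : ℝ) ^ 2 ∂μ = ∑ i ∈ S, ∑ j ∈ S, μ.real (A i ∩ A j) := by
  let B (p : ι × ι) : Set Ω := A p.1 ∩ A p.2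
  have hsq (ω) : ((S.filter (ω ∈ A ·)).card : ℝ) ^ 2 = (((S ×ˢ S).filter (ω ∈ B ·)).card : ℝ) := by
    have : (S ×ˢ S).filter (ω ∈ B ·) = S.filter (ω ∈ A ·) ×ˢ S.filter (ω ∈ A ·) := by
      ext
      simp only [B, Finset.mem_filter, Finset.mem_product, Set.mem_inter_iff]
      tauto
    rw [this, Finset.card_product, Nat.cast_mul, sq]
  simp only [hsq]
  rw [← Finset.sum_product' S S fun i j => μ.real (A i ∩ A j)]
  convert integral_card_filter_mem (μ := μ) (S := S ×ˢ S) (A := B) fun p =>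
    (hA p.1).inter (hA p.2)

lemma sq_mul_real_card_filter_mem_le {p V : ℝ} (hA : ∀ i, MeasurableSet (A i))
    (hp : ∀ i ∈ S, μ.real (A i) = p)
    (hV : ∑ i ∈ S, ∑ j ∈ S, μ.real (A i ∩ A j) ≤ p ^ 2 * (S.card : ℝ) ^ 2 + V) :
    (p * S.card / 2) ^ 2 * μ.real {ω | ((S.filter (ω ∈ A ·)).card : ℝ) ≤ p * S.card / 2} ≤ V := by
  set X : Ω → ℝ := fun ω => ((S.filter (ω ∈ A ·)).card : ℝ)
  have hX : MemLp X 2 μ := memLp_card_filter_mem hA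
  have hmean : ∫ ω, X ω ∂μ = p * S.card := by
    rw [integral_card_filter_mem hA, Finset.sum_congr rfl hp, Finset.sum_const, nsmul_eq_mul,
      mul_comm]
  have hmean0 : 0 ≤ p * S.card := hmean ▸ integral_nonneg fun ω => Nat.cast_nonneg _
  have hvar : ∫ ω, (X ω - p * S.card) ^ 2 ∂μ ≤ V := by
    rw [← hmean, ← variance_eq_integral hX.aemeasurable, variance_eq_sub hX, hmean]
    simp only [Pi.pow_apply, X, integral_card_filter_mem_sq hA]
    linarith [mul_pow p (S.card : ℝ) 2]
  refine le_trans ?_ ((mul_meas_ge_le_integral_of_nonneg (.of_forall fun ω => sq_nonneg _)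
    (hX.sub (memLp_const _)).integrable_sq ((p * S.card / 2) ^ 2)).trans hvar)
  refine mul_le_mul_of_nonneg_left (measureReal_mono fun ω hω => ?_) (sq_nonneg _)
  have hle : X ω ≤ p * S.card / 2 := hω
  change _ ≤ (X ω - p * S.card) ^ 2
  rw [← sq_abs (X ω - _), abs_of_nonpos (by linarith)]
  exact pow_le_pow_left₀ (by linarith) (by linarith) 2

end SecondMoment

section IsonormalCount

variable {E ι κ : Type*} [NormedAddCommGroup E] [InnerProductSpace ℝ E] [FiniteDimensional ℝ E]
  [Fintype ι] {C : ConvexCone ℝ (EuclideanSpace ℝ ι)}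

lemma isonormal_normalize_preimage {f : E} (hf : f ≠ 0) :
    isonormal ι (NormedSpace.normalize f) ⁻¹' C = isonormal ι f ⁻¹' C := by
  ext g
  simp only [NormedSpace.normalize, isonormal_smul, Set.mem_preimage, _root_.smul_apply,
    SetLike.mem_coe, C.smul_mem_iff (inv_pos.2 (norm_pos_iff.2 hf))]

variable [MeasurableSpace E] [BorelSpace E]

lemma real_isonormal_preimage {f : E} (hf : f ≠ 0)
    (hC : MeasurableSet (C : Set (EuclideanSpace ℝ ι))) :
    (stdGaussian (PiLp 2 fun _ : ι => E)).real (isonormal ι f ⁻¹' C) =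
      (stdGaussian (EuclideanSpace ℝ ι)).real C := by
  rw [← isonormal_normalize_preimage hf, ← map_measureReal_apply (by fun_prop) hC,
    map_isonormal_stdGaussian (NormedSpace.norm_normalize hf)]

lemma real_isonormal_preimage_inter_le {f g : E} (hf : f ≠ 0) (hg : g ≠ 0)
    (hC : MeasurableSet (C : Set (EuclideanSpace ℝ ι))) {δ P : ℝ} (hδ : 0 < δ) (hδ1 : δ ≤ 1)
    (hP : ∀ ρ, |ρ| < δ → jointProb (C : Set (EuclideanSpace ℝ ι)) ρ ≤ P) :
    (stdGaussian (PiLp 2 fun _ : ι => E)).real (isonormal ι f ⁻¹' C ∩ isonormal ι g ⁻¹' C) ≤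
      P + (inner ℝ f g : ℝ) ^ 2 / (‖f‖ ^ 2 * ‖g‖ ^ 2 * δ ^ 2) := by
  have hP0 : 0 ≤ P := measureReal_nonneg.trans (hP 0 (by simpa))
  have := norm_pos_iff.2 hf
  have := norm_pos_iff.2 hg
  set ρ : ℝ := inner ℝ (NormedSpace.normalize f) (NormedSpace.normalize g) with hρ
  have hratio : (inner ℝ f g : ℝ) ^ 2 / (‖f‖ ^ 2 * ‖g‖ ^ 2 * δ ^ 2) = ρ ^ 2 / δ ^ 2 := by
    rw [hρ, NormedSpace.normalize, NormedSpace.normalize, real_inner_smul_left,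
      real_inner_smul_right]
    field_simp
  rw [hratio]
  obtain hlt | hge := lt_or_ge |ρ| δ
  · rw [← isonormal_normalize_preimage hf, ← isonormal_normalize_preimage hg,
      real_isonormal_mem_inter_eq_jointProb (NormedSpace.norm_normalize hf)
        (NormedSpace.norm_normalize hg) (hlt.trans_le hδ1) hC]
    exact (hP ρ hlt).trans (le_add_of_nonneg_right (by positivity))
  · refine measureReal_le_one.trans (le_add_of_nonneg_of_le hP0 ?_)
    rw [one_le_div (by positivity), ← sq_abs ρ]
    exact pow_le_pow_left₀ hδ.le hge 2

lemma sum_real_isonormal_preimage_inter_le {S : Finset κ} {u : κ → E} {f : E} {η δ L B : ℝ}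
    (hC : MeasurableSet (C : Set (EuclideanSpace ℝ ι))) (hδ : 0 < δ) (hδ1 : δ ≤ 1)
    (hη : ∀ ρ, |ρ| < δ → jointProb (C : Set (EuclideanSpace ℝ ι)) ρ ≤
      (stdGaussian (EuclideanSpace ℝ ι)).real C ^ 2 + η)
    (hL : 0 < L) (hf : f ≠ 0) (hu : ∀ j ∈ S, L ≤ ‖u j‖ ^ 2)
    (hB : ∑ j ∈ S, (inner ℝ f (u j) : ℝ) ^ 2 ≤ B * ‖f‖ ^ 2) :
    ∑ j ∈ S, (stdGaussian (PiLp 2 fun _ : ι => E)).real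
        (isonormal ι f ⁻¹' C ∩ isonormal ι (u j) ⁻¹' C) ≤
      S.card * ((stdGaussian (EuclideanSpace ℝ ι)).real C ^ 2 + η) + B / (L * δ ^ 2) := by
  set p := (stdGaussian (EuclideanSpace ℝ ι)).real C
  have := norm_pos_iff.2 hf
  have hpair (j) (hj : j ∈ S) :
      (stdGaussian (PiLp 2 fun _ : ι => E)).real
        (isonormal ι f ⁻¹' C ∩ isonormal ι (u j) ⁻¹' C) ≤
      p ^ 2 + η + (inner ℝ f (u j) : ℝ) ^ 2 / (‖f‖ ^ 2 * L * δ ^ 2) := by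
    have hne : u j ≠ 0 := fun h => by simpa [h, hL.not_ge] using hu j hj
    refine (real_isonormal_preimage_inter_le hf hne hC hδ hδ1 hη).trans ?_
    gcongr
    exact hu j hj
  have hrow : ∑ j ∈ S, (inner ℝ f (u j) : ℝ) ^ 2 / (‖f‖ ^ 2 * L * δ ^ 2) ≤ B / (L * δ ^ 2) := by
    rw [← Finset.sum_div, div_le_div_iff₀ (by positivity) (by positivity)]
    calc _ ≤ B * ‖f‖ ^ 2 * (L * δ ^ 2) := by gcongr
      _ = _ := by ring
  refine (Finset.sum_le_sum hpair).trans ?_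
  rw [Finset.sum_add_distrib, Finset.sum_const, nsmul_eq_mul]
  exact add_le_add le_rfl hrow

lemma sq_mul_real_card_isonormal_mem_le {S : Finset κ} {u : κ → E} {η δ L B : ℝ}
    (hC : MeasurableSet (C : Set (EuclideanSpace ℝ ι))) (hδ : 0 < δ) (hδ1 : δ ≤ 1)
    (hη : ∀ ρ, |ρ| < δ → jointProb (C : Set (EuclideanSpace ℝ ι)) ρ ≤
      (stdGaussian (EuclideanSpace ℝ ι)).real C ^ 2 + η)
    (hL : 0 < L) (hu : ∀ i ∈ S, L ≤ ‖u i‖ ^ 2)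
    (hB : ∀ i ∈ S, ∑ j ∈ S, (inner ℝ (u i) (u j) : ℝ) ^ 2 ≤ B * ‖u i‖ ^ 2) :
    ((stdGaussian (EuclideanSpace ℝ ι)).real C * S.card / 2) ^ 2 *
      (stdGaussian (PiLp 2 fun _ : ι => E)).real
        {ω | ((S.filter fun i => isonormal ι (u i) ω ∈ C).card : ℝ) ≤
          (stdGaussian (EuclideanSpace ℝ ι)).real C * S.card / 2} ≤
      η * (S.card : ℝ) ^ 2 + S.card * (B / (L * δ ^ 2)) := by
  have hne (i) (hi : i ∈ S) : u i ≠ 0 := fun h => by simpa [h, hL.not_ge] using hu i hi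
  set p := (stdGaussian (EuclideanSpace ℝ ι)).real C
  refine sq_mul_real_card_filter_mem_le (A := fun i => isonormal ι (u i) ⁻¹' C)
    (fun i => (isonormal ι (u i)).continuous.measurable hC)
    (fun i hi => real_isonormal_preimage (hne i hi) hC) ?_
  calc _ ≤ ∑ _i ∈ S, (S.card * (p ^ 2 + η) + B / (L * δ ^ 2)) :=
        Finset.sum_le_sum fun i hi =>
          sum_real_isonormal_preimage_inter_le hC hδ hδ1 hη hL (hne i hi) hu (hB i hi)
    _ = _ := by rw [Finset.sum_const, nsmul_eq_mul]; ring

end IsonormalCount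

end Gaussian

/-! ### The free field and its harmonic extensions -/

section Field

open ProbabilityTheory

/-- The space of `N` independent copies of the Dirichlet space. The standard Gaussian measure on it
is the law of the vectorial free field. -/
abbrev FieldSpace (n N : ℕ) : Type := PiLp 2 fun _ : Fin N => DirichletSpace n

namespace FieldSpace

variable {n N : ℕ}

/-- The configuration with components `g 0, …, g (N - 1)`; its value at `x` pairs `g` with the
Green function at `x`. -/
def toConf (g : FieldSpace n N) : Conf N := fun x => isonormal (Fin N) (DirichletSpace.green n x) g

lemma toConf_apply (g : FieldSpace n N) (x : Site) (i : Fin N) : toConf g x i = g i x := by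
  rw [toConf, isonormal_apply, DirichletSpace.inner_green]

lemma measurable_toConf : Measurable (toConf (n := n) (N := N)) :=
  measurable_pi_lambda _ fun x =>
    (isonormal (Fin N) (DirichletSpace.green n x)).continuous.measurable

variable (n N) in
/-- Extension by zero, as an isomorphism from the configurations on `Λ_n` to `FieldSpace n N`. -/
def ofLam : ({x // x ∈ Lam n} → Spin N) ≃L[ℝ] FieldSpace n N :=
  LinearEquiv.toContinuousLinearEquiv
    { toFun := fun ω => WithLp.toLp 2 fun i =>
        DirichletSpace.ofFun (fun x => extZero n ω x i) fun x hx => by simp [extZero, hx]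
      invFun := fun g x => toConf g x
      map_add' := fun ω η => by
        ext i x
        by_cases hx : x ∈ Lam n <;> simp [extZero, hx]
      map_smul' := fun c ω => by
        ext i x
        by_cases hx : x ∈ Lam n <;> simp [extZero, hx]
      left_inv := fun ω => by
        ext x i
        simp [toConf_apply, extZero]
      right_inv := fun g => by
        ext i x
        by_cases hx : x ∈ Lam n <;>
          simp [toConf_apply, extZero, hx, DirichletSpace.apply_eq_zero] }

lemma toConf_ofLam (ω : {x // x ∈ Lam n} → Spin N) : toConf (ofLam n N ω) = extZero n ω := by
  ext x i
  rw [toConf_apply]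
  rfl

lemma dirEnergy_toConf (g : FieldSpace n N) : dirEnergy n N (toConf g) = ‖g‖ ^ 2 / 2 := by
  have hgrad (x : Site) :
      ‖toConf g x - toConf g (x + ((1 : ℤ), (0 : ℤ)))‖ ^ 2 +
        ‖toConf g x - toConf g (x + ((0 : ℤ), (1 : ℤ)))‖ ^ 2 = ∑ i, gradSq (g i) x := by
    simp only [EuclideanSpace.norm_sq_eq, ← Finset.sum_add_distrib, PiLp.sub_apply, toConf_apply,
      Real.norm_eq_abs, sq_abs, gradSq, edgeDiff]
  simp only [dirEnergy, hgrad]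
  rw [PiLp.norm_sq_eq_of_L2, Finset.sum_comm]
  simp only [DirichletSpace.norm_sq_eq, ← Finset.mul_sum, energy]
  ring

lemma map_ofLam_gffAux : (gffAux n N).map (ofLam n N) =
    ((Measure.pi fun _ : {x // x ∈ Lam n} => (volume : Measure (Spin N))).map
      (ofLam n N)).withDensity gaussDensity := by
  have hT : Measurable (ofLam n N) := (ofLam n N).continuous.measurable
  ext s hs
  rw [Measure.map_apply hT hs, gffAux, withDensity_apply _ (hT hs), withDensity_apply _ hs,
    setLIntegral_map hs measurable_gaussDensity hT]
  simp only [gaussDensity, ← toConf_ofLam, dirEnergy_toConf]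

end FieldSpace

open FieldSpace

lemma gff_eq_map_stdGaussian (n N : ℕ) : gff n N = (stdGaussian (FieldSpace n N)).map toConf := by
  have hT : Measurable (ofLam n N) := (ofLam n N).continuous.measurable
  have hmass : gffAux n N Set.univ = (gffAux n N).map (ofLam n N) Set.univ := by
    rw [Measure.map_apply hT .univ, Set.preimage_univ]
  have hext : extZero n (N := N) = toConf ∘ ofLam n N := funext fun ω => (toConf_ofLam ω).symm
  have := (ofLam n N).isAddHaarMeasure_map
    (Measure.pi fun _ : {x // x ∈ Lam n} => (volume : Measure (Spin N)))
  rw [gff, hmass, hext, ← Measure.map_map measurable_toConf hT, map_ofLam_gffAux,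
    ← Measure.map_smul, inv_smul_withDensity_gaussDensity]

instance isProbabilityMeasure_gff (n N : ℕ) : IsProbabilityMeasure (gff n N) := by
  rw [gff_eq_map_stdGaussian]
  exact Measure.isProbabilityMeasure_map measurable_toConf.aemeasurable

lemma indepFun_map_of_comp {Ω Ω' β γ : Type*} [MeasurableSpace Ω] [MeasurableSpace Ω']
    [MeasurableSpace β] [MeasurableSpace γ] {μ : Measure Ω} {T : Ω → Ω'} {X : Ω' → β} {Y : Ω' → γ}
    (hT : Measurable T) (hX : Measurable X) (hY : Measurable Y)
    (h : IndepFun (X ∘ T) (Y ∘ T) μ) : IndepFun X Y (μ.map T) := by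
  rw [indepFun_iff_measure_inter_preimage_eq_mul] at h ⊢
  intro s t hs ht
  rw [Measure.map_apply hT ((hX hs).inter (hY ht)), Measure.map_apply hT (hX hs),
    Measure.map_apply hT (hY ht)]
  exact h s t hs ht

lemma condExp_ae_eq_of_indepFun_sub {Ω β F : Type*} {mΩ : MeasurableSpace Ω} [MeasurableSpace β]
    [NormedAddCommGroup F] [NormedSpace ℝ F] [CompleteSpace F] [MeasurableSpace F] [BorelSpace F]
    [SecondCountableTopology F] {μ : Measure Ω} [IsProbabilityMeasure μ] {X : Ω → β} {f h : Ω → F}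
    (hX : Measurable X) (hf : Measurable f) (hfi : Integrable f μ)
    (hh : StronglyMeasurable[MeasurableSpace.comap X inferInstance] h) (hhi : Integrable h μ)
    (hmean : ∫ ω, (f - h) ω ∂μ = 0) (hindep : IndepFun (f - h) X μ) :
    μ[f | MeasurableSpace.comap X inferInstance] =ᵐ[μ] h := by
  have hsub : Measurable (f - h) := hf.sub (hh.mono hX.comap_le).measurable
  have hzero := condExp_indep_eq hsub.comap_le hX.comap_le
    (comap_measurable (f - h)).stronglyMeasurable hindep
  have hadd := condExp_add (m := MeasurableSpace.comap X inferInstance) (hfi.sub hhi) hhi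
  rw [sub_add_cancel, condExp_of_stronglyMeasurable hX.comap_le hh hhi] at hadd
  filter_upwards [hadd, hzero] with ω hω hω0
  rw [hω, Pi.add_apply, hω0, hmean, zero_add]

section HarmExt

variable {n N : ℕ} {K : Set Site} {c : Site}

lemma exists_stronglyMeasurable_comp_toConf_eq_isonormal {v : DirichletSpace n}
    (hv : v ∈ DirichletSpace.greenSpan n K) :
    ∃ h : Conf N → Spin N, StronglyMeasurable[mGrid N K] h ∧
      ∀ g : FieldSpace n N, h (toConf g) = isonormal (Fin N) v g := by
  induction hv using Submodule.span_induction with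
  | mem v hv =>
    obtain ⟨y, hy, rfl⟩ := hv
    have heval : Measurable[mGrid N K] fun φ : Conf N => φ y :=
      (measurable_pi_apply (⟨y, hy⟩ : K)).comp (comap_measurable fun (φ : Conf N) (y : K) => φ y)
    exact ⟨fun φ => φ y, heval.stronglyMeasurable, fun g => rfl⟩
  | zero =>
    refine ⟨0, stronglyMeasurable_zero, fun g => ?_⟩
    ext i
    simp [isonormal_apply]
  | add v w _ _ hv hw =>
    obtain ⟨h, hm, hh⟩ := hv
    obtain ⟨k, km, hk⟩ := hw
    exact ⟨h + k, hm.add km, fun g => by simp [hh, hk, isonormal_add]⟩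
  | smul a v _ hv =>
    obtain ⟨h, hm, hh⟩ := hv
    exact ⟨a • h, hm.const_smul a, fun g => by simp [hh, isonormal_smul]⟩

lemma integrable_clm_stdGaussian {E F : Type*} [NormedAddCommGroup E] [InnerProductSpace ℝ E]
    [FiniteDimensional ℝ E] [MeasurableSpace E] [BorelSpace E] [NormedAddCommGroup F]
    [NormedSpace ℝ F] (L : E →L[ℝ] F) : Integrable L (stdGaussian E) :=
  L.integrable_comp (φ := id) IsGaussian.integrable_id

lemma integral_clm_stdGaussian {E F : Type*} [NormedAddCommGroup E] [InnerProductSpace ℝ E]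
    [FiniteDimensional ℝ E] [MeasurableSpace E] [BorelSpace E] [NormedAddCommGroup F]
    [NormedSpace ℝ F] [CompleteSpace F] (L : E →L[ℝ] F) : ∫ v, L v ∂(stdGaussian E) = 0 := by
  rw [L.integral_comp_comm (φ := fun v => v) IsGaussian.integrable_id, integral_id_stdGaussian,
    map_zero]

lemma indepFun_isonormal_green_sub_greenProj :
    IndepFun (isonormal (Fin N) (DirichletSpace.green n c - DirichletSpace.greenProj n K c))
      (fun (g : FieldSpace n N) (y : K) => toConf g y) (stdGaussian (FieldSpace n N)) := by
  set P := (DirichletSpace.greenSpan n K).starProjection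
  have hker : P (DirichletSpace.green n c - DirichletSpace.greenProj n K c) = 0 := by
    rw [map_sub, DirichletSpace.greenProj, sub_eq_zero, eq_comm,
      Submodule.starProjection_eq_self_iff]
    exact Submodule.starProjection_apply_mem _ _
  have hfactor : (fun (g : FieldSpace n N) (y : K) => toConf g y) =
      (fun g (y : K) => toConf g y) ∘ coordMap (Fin N) P := by
    ext1 g
    ext1 y
    rw [Function.comp_apply, toConf, toConf, isonormal_coordMap,
      (isSelfAdjoint_starProjection _).adjoint_eq,
      Submodule.starProjection_eq_self_iff.2 (DirichletSpace.green_mem_greenSpan y.2)]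
  rw [hfactor]
  refine (indepFun_isonormal_coordMap hker).comp measurable_id ?_
  exact measurable_pi_lambda _ fun y => (measurable_pi_apply (y : Site)).comp measurable_toConf

lemma harmExt_toConf_ae_eq (n N : ℕ) (K : Set Site) (c : Site) :
    ∀ᵐ g ∂stdGaussian (FieldSpace n N),
      harmExt n N K c (toConf g) = isonormal (Fin N) (DirichletSpace.greenProj n K c) g := by
  obtain ⟨h, hm, hh⟩ := exists_stronglyMeasurable_comp_toConf_eq_isonormal (N := N)
    (DirichletSpace.greenProj_mem_greenSpan (n := n) (K := K) (c := c))
  have hX : Measurable fun (φ : Conf N) (y : K) => φ y := by fun_prop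
  have hf : Measurable fun φ : Conf N => φ c := measurable_pi_apply c
  have hm0 : Measurable h := (hm.mono hX.comap_le).measurable
  have hT : AEMeasurable toConf (stdGaussian (FieldSpace n N)) := measurable_toConf.aemeasurable
  have hsub : ((fun φ : Conf N => φ c) - h) ∘ toConf =
      isonormal (Fin N) (DirichletSpace.green n c - DirichletSpace.greenProj n K c) := by
    ext1 g
    rw [Function.comp_apply, Pi.sub_apply, hh, isonormal_sub]
    rfl
  suffices hae : harmExt n N K c =ᵐ[gff n N] h by
    rw [gff_eq_map_stdGaussian] at hae
    filter_upwards [ae_of_ae_map hT hae] with g hg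
    rw [hg, hh]
  refine condExp_ae_eq_of_indepFun_sub hX hf ?_ hm ?_ ?_ ?_ <;> rw [gff_eq_map_stdGaussian]
  · exact (integrable_map_measure hf.aestronglyMeasurable hT).2 (integrable_clm_stdGaussian _)
  · rw [integrable_map_measure hm0.aestronglyMeasurable hT]
    exact (integrable_clm_stdGaussian _).congr (.of_forall fun g => (hh g).symm)
  · rw [integral_map hT (hf.sub hm0).aestronglyMeasurable]
    exact (congrArg (fun F => ∫ g, F g ∂_) hsub).trans (integral_clm_stdGaussian _)
  · refine indepFun_map_of_comp measurable_toConf (hf.sub hm0) hX ?_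
    rw [hsub]
    exact indepFun_isonormal_green_sub_greenProj

end HarmExt

end Field

/-! ### Counting positive boxes at fixed `n` -/

section Count

open ProbabilityTheory FieldSpace

/-- The scales of the counting argument: `a` is the side of the boxes, `m` the number of box centers
per row of the grid, `q` the side, in units of `a`, of the squares on which the field is averaged,
and `R` the radius of the logarithmic cutoff around each box. -/
structure AdmissibleScales (n : ℕ) (α ρ : ℝ) (a q m R : ℕ) : Prop where
  evenSide_eq : evenSide n α = a
  one_le_side : 1 ≤ a
  one_le_block : 1 ≤ q
  side_mul_block_le : a * q ≤ n + 1
  side_lt_radius : a < R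
  radius_le : 4 * R ≤ n
  grid_le : 4 * ((m : ℝ) * a) ≤ ρ
  ball_le : 4 * ρ ≤ n

/-- The average squared correlation of the harmonic extensions at the points of the grid, up to a
constant factor. -/
def gridCorrelation (n a q m R : ℕ) : ℝ :=
  ((1 + log (n + 1)) * ((q : ℝ) + 1) ^ 2 / (m : ℝ) ^ 2 + (log (n + 1) - log (a * q))) /
    (log R - log a)

/-- The probability that a standard Gaussian vector has positive coordinates. -/
def posProb (N : ℕ) : ℝ := (stdGaussian (Spin N)).real (posOrthant (Fin N))

lemma posProb_pos (N : ℕ) : 0 < posProb N :=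
  stdGaussian_real_pos (isOpen_posOrthant _) (nonempty_posOrthant _)

lemma measurable_countPos (D : Set (ℝ × ℝ)) (N n : ℕ) (α ρ : ℝ) :
    Measurable (countPos D N n α ρ) := by
  unfold countPos
  simp only [Finset.card_filter]
  refine Finset.measurable_fun_sum _ fun c _ =>
    Measurable.ite ((MeasurableSet.const _).inter ?_) measurable_const measurable_const
  have hrestrict : Measurable fun (φ : Conf N) (y : gridK D n α (0, 0)) => φ y := by fun_prop
  have hharm : Measurable (harmExt n N (gridK D n α (0, 0)) c) :=
    (stronglyMeasurable_condExp.mono hrestrict.comap_le).measurable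
  exact hharm (isOpen_posOrthant (Fin N)).measurableSet

lemma gridPt_injective {a : ℕ} (ha : 1 ≤ a) : Function.Injective (gridPt a) := by
  have ha0 : a ≠ 0 := by omega
  rintro ⟨p₁, p₂⟩ ⟨q₁, q₂⟩ h
  simpa [gridPt, ha0] using h

lemma boxAt_gridPt_subset_latBall {a m : ℕ} {ρ : ℝ} (ha : 1 ≤ a) (hm : 4 * ((m : ℝ) * a) ≤ ρ)
    {p : ℕ × ℕ} (hp : p ∈ gridIdx m) : boxAt (a : ℤ) (gridPt a p) ⊆ latBall ρ := by
  simp only [gridIdx, Finset.mem_product, Finset.mem_range] at hp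
  rintro y ⟨hy₁, hy₂⟩
  have hcoord (k : ℕ) (z : ℤ) (hk : k < m) (hz : 2 * |z - (k : ℤ) * a| ≤ a) :
      |(z : ℝ)| ≤ ρ / 4 := by
    have hdist : 2 * |(z : ℝ) - k * a| ≤ a := by exact_mod_cast hz
    have hka : ((k : ℝ) + 1) * a ≤ m * a := by gcongr; exact_mod_cast hk
    have htri := abs_add_le ((z : ℝ) - k * a) (k * a)
    rw [sub_add_cancel, abs_of_nonneg (by positivity : (0 : ℝ) ≤ k * a)] at htri
    linarith
  have hρ : 0 < ρ := by
    have : (1 : ℝ) ≤ a := by exact_mod_cast ha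
    have : (1 : ℝ) ≤ m := by exact_mod_cast (by omega : 1 ≤ m)
    exact lt_of_lt_of_le (by positivity) hm
  have h₁ := sq_le_sq' (abs_le.1 (hcoord _ _ hp.1 hy₁)).1 (abs_le.1 (hcoord _ _ hp.1 hy₁)).2
  have h₂ := sq_le_sq' (abs_le.1 (hcoord _ _ hp.2 hy₂)).1 (abs_le.1 (hcoord _ _ hp.2 hy₂)).2
  exact (Real.sqrt_lt' hρ).2 (by nlinarith)

namespace AdmissibleScales

variable {n N : ℕ} {α ρ : ℝ} {a q m R : ℕ} {p : ℕ × ℕ} {x : Site}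

lemma mem_Lam_of_supDist_lt (h : AdmissibleScales n α ρ a q m R) (hp : p ∈ gridIdx m)
    (hx : supDist (gridPt a p) x < R) : x ∈ Lam n := by
  simp only [gridIdx, Finset.mem_product, Finset.mem_range] at hp
  have hma : 16 * (m * a) ≤ n := by
    have : (16 : ℝ) * (m * a) ≤ n := by linarith [h.grid_le, h.ball_le]
    exact_mod_cast this
  have hp₁ : p.1 * a ≤ m * a := Nat.mul_le_mul_right _ hp.1.le
  have hp₂ : p.2 * a ≤ m * a := Nat.mul_le_mul_right _ hp.2.le
  have hR := h.radius_le
  rw [mem_Lam]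
  simp only [supDist, gridPt, ← Nat.cast_mul, Int.abs_eq_natAbs] at hx ⊢
  omega

lemma gridPt_mem_Lam (h : AdmissibleScales n α ρ a q m R) (hp : p ∈ gridIdx m) :
    gridPt a p ∈ Lam n :=
  h.mem_Lam_of_supDist_lt hp (by simpa [supDist] using h.side_lt_radius.pos)

variable {D : Set (ℝ × ℝ)}

lemma gridPt_mem_centersF (h : AdmissibleScales n α ρ a q m R) (hD : latBall ρ ⊆ Dn D n)
    (hp : p ∈ gridIdx m) : gridPt a p ∈ centersF D n α (0, 0) := by
  rw [centersF, Finset.mem_filter, isCenter, h.evenSide_eq]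
  exact ⟨h.gridPt_mem_Lam hp, ⟨p.1, p.2, by simp [gridPt]⟩,
    (boxAt_gridPt_subset_latBall h.one_le_side h.grid_le hp).trans hD⟩

lemma innerBdryAt_gridPt_subset_gridK (h : AdmissibleScales n α ρ a q m R)
    (hD : latBall ρ ⊆ Dn D n) (hp : p ∈ gridIdx m) :
    innerBdryAt (a : ℤ) (gridPt a p) ⊆ gridK D n α (0, 0) := by
  rw [gridK, h.evenSide_eq]
  exact Set.subset_biUnion_of_mem (u := fun c => innerBdryAt (a : ℤ) c)
    (h.gridPt_mem_centersF hD hp)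

lemma card_filter_isonormal_mem_posOrthant_le (h : AdmissibleScales n α ρ a q m R)
    (hD : latBall ρ ⊆ Dn D n) :
    ∀ᵐ g ∂stdGaussian (FieldSpace n N),
      ((gridIdx m).filter fun p => isonormal (Fin N)
        (DirichletSpace.greenProj n (gridK D n α (0, 0)) (gridPt a p)) g ∈
          posOrthant (Fin N)).card ≤
      countPos D N n α ρ (toConf g) := by
  filter_upwards [ae_all_iff.2 fun p =>
    harmExt_toConf_ae_eq n N (gridK D n α (0, 0)) (gridPt a p)] with g hg
  refine Finset.card_le_card_of_injOn (gridPt a) (fun p hp => ?_)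
    (gridPt_injective h.one_le_side).injOn
  obtain ⟨hp, hpos⟩ := Finset.mem_filter.1 hp
  refine Finset.mem_coe.2 (Finset.mem_filter.2 ⟨h.gridPt_mem_centersF hD hp, ?_, ?_⟩)
  · rw [h.evenSide_eq]
    exact boxAt_gridPt_subset_latBall h.one_le_side h.grid_le hp
  · rw [hg p]
    exact hpos

lemma sum_inner_greenProj_sq_le (h : AdmissibleScales n α ρ a q m R) (K : Set Site) (c : Site) :
    ∑ p ∈ gridIdx m, inner ℝ (DirichletSpace.greenProj n K c)
        (DirichletSpace.greenProj n K (gridPt a p)) ^ 2 ≤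
      4 * π * (4 * (1 + log (n + 1)) * ((q : ℝ) + 1) ^ 2
        + 4 * (m : ℝ) ^ 2 * (log (n + 1) - log (a * q))) *
        ‖DirichletSpace.greenProj n K c‖ ^ 2 := by
  simp only [DirichletSpace.inner_greenProj_greenProj, DirichletSpace.norm_sq_eq]
  refine (sum_sq_gridPt_le (DirichletSpace.apply_eq_zero _) h.one_le_side h.one_le_block
    h.side_mul_block_le fun p hp => h.gridPt_mem_Lam hp).trans_eq ?_
  field_simp

lemma log_side_lt_log_radius (h : AdmissibleScales n α ρ a q m R) : log a < log R :=
  log_lt_log (by exact_mod_cast h.one_le_side) (by exact_mod_cast h.side_lt_radius)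

lemma even_side (h : AdmissibleScales n α ρ a q m R) : Even a := by
  have : Even (evenSide n α) := even_two_mul _
  rwa [h.evenSide_eq, Int.even_coe_nat] at this

lemma sq_mul_real_countPos_le {η δ : ℝ} (h : AdmissibleScales n α ρ a q m R)
    (hD : latBall ρ ⊆ Dn D n) (hδ : 0 < δ) (hδ1 : δ ≤ 1)
    (hη : ∀ s, |s| < δ → jointProb (posOrthant (Fin N) : Set (Spin N)) s ≤ posProb N ^ 2 + η) :
    (posProb N * (m : ℝ) ^ 2 / 2) ^ 2 *
        (gff n N).real {φ | (countPos D N n α ρ φ : ℝ) ≤ posProb N * (m : ℝ) ^ 2 / 2} ≤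
      η * ((m : ℝ) ^ 2) ^ 2 + (m : ℝ) ^ 2 * (4 * π * (4 * (1 + log (n + 1)) * ((q : ℝ) + 1) ^ 2
        + 4 * (m : ℝ) ^ 2 * (log (n + 1) - log (a * q))) / ((log R - log a) / 16 * δ ^ 2)) := by
  have hcount := sq_mul_real_card_isonormal_mem_le
    (isOpen_posOrthant (Fin N)).measurableSet hδ hδ1 hη
    (div_pos (sub_pos.2 h.log_side_lt_log_radius) (by norm_num : (0 : ℝ) < 16))
    (fun p hp => DirichletSpace.log_sub_log_div_le_norm_sq_greenProj h.even_side h.one_le_side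
      h.side_lt_radius (fun x hx => h.mem_Lam_of_supDist_lt hp hx)
      (h.innerBdryAt_gridPt_subset_gridK hD hp))
    (fun p _ => h.sum_inner_greenProj_sq_le (gridK D n α (0, 0)) (gridPt a p))
  rw [card_gridIdx, Nat.cast_pow] at hcount
  refine le_trans (mul_le_mul_of_nonneg_left ?_ (sq_nonneg _)) hcount
  have hmeas : MeasurableSet {φ | (countPos D N n α ρ φ : ℝ) ≤ posProb N * (m : ℝ) ^ 2 / 2} :=
    ((measurable_from_top (f := fun k : ℕ => (k : ℝ))).comp
      (measurable_countPos D N n α ρ)) measurableSet_Iic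
  rw [gff_eq_map_stdGaussian, map_measureReal_apply measurable_toConf hmeas]
  refine ENNReal.toReal_mono (measure_ne_top _ _) (measure_mono_ae ?_)
  filter_upwards [h.card_filter_isonormal_mem_posOrthant_le (N := N) hD] with g hg hle
  exact (Nat.cast_le.2 hg).trans hle

lemma posProb_sq_mul_real_countPos_le {η δ : ℝ} (h : AdmissibleScales n α ρ a q m R) (hm : 1 ≤ m)
    (hD : latBall ρ ⊆ Dn D n) (hδ : 0 < δ) (hδ1 : δ ≤ 1)
    (hη : ∀ s, |s| < δ → jointProb (posOrthant (Fin N) : Set (Spin N)) s ≤ posProb N ^ 2 + η) :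
    posProb N ^ 2 / 4 *
        (gff n N).real {φ | (countPos D N n α ρ φ : ℝ) ≤ posProb N * (m : ℝ) ^ 2 / 2} ≤
      η + 256 * π / δ ^ 2 * gridCorrelation n a q m R := by
  have hm0 : (0 : ℝ) < m := by exact_mod_cast hm
  have := sub_pos.2 h.log_side_lt_log_radius
  refine le_of_mul_le_mul_left ?_ (pow_pos hm0 4)
  refine ((Eq.le ?_).trans (h.sq_mul_real_countPos_le hD hδ hδ1 hη)).trans_eq ?_
  · ring
  · rw [gridCorrelation]
    field_simp
    ring

end AdmissibleScales

end Count

/-! ### Growth exponents of the scales -/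

section GrowthExponent

open scoped Topology

/-- `u n = n ^ (L + o(1))`, with `u` eventually positive. -/
structure HasGrowthExponent (u : ℕ → ℝ) (L : ℝ) : Prop where
  eventually_pos : ∀ᶠ n in atTop, 0 < u n
  tendsto_log_div_log : Tendsto (fun n : ℕ => log (u n) / log n) atTop (𝓝 L)

lemma tendsto_log_natCast_atTop : Tendsto (fun n : ℕ => log n) atTop atTop :=
  tendsto_log_atTop.comp tendsto_natCast_atTop_atTop

namespace HasGrowthExponent

variable {u v w : ℕ → ℝ} {L M : ℝ}

lemma const {c : ℝ} (hc : 0 < c) : HasGrowthExponent (fun _ => c) 0 :=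
  ⟨.of_forall fun _ => hc, tendsto_log_natCast_atTop.const_div_atTop _⟩

lemma natCast_rpow (s : ℝ) : HasGrowthExponent (fun n => (n : ℝ) ^ s) s := by
  have hn : ∀ᶠ n : ℕ in atTop, (0 : ℝ) < n :=
    tendsto_natCast_atTop_atTop.eventually_gt_atTop 0
  refine ⟨hn.mono fun n hn => rpow_pos_of_pos hn s, tendsto_const_nhds.congr' ?_⟩
  filter_upwards [hn, tendsto_log_natCast_atTop.eventually_gt_atTop 0] with n hn hlog
  rw [log_rpow hn, mul_div_cancel_right₀ _ hlog.ne']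

lemma natCast : HasGrowthExponent (fun n => (n : ℝ)) 1 := by
  simpa only [rpow_one] using natCast_rpow 1

lemma log_natCast : HasGrowthExponent (fun n => log n) 0 :=
  ⟨tendsto_log_natCast_atTop.eventually_gt_atTop 0,
    isLittleO_log_id_atTop.tendsto_div_nhds_zero.comp tendsto_log_natCast_atTop⟩

lemma mul (hu : HasGrowthExponent u L) (hv : HasGrowthExponent v M) :
    HasGrowthExponent (fun n => u n * v n) (L + M) := by
  refine ⟨hu.eventually_pos.and hv.eventually_pos |>.mono fun n h => mul_pos h.1 h.2,
    (hu.tendsto_log_div_log.add hv.tendsto_log_div_log).congr' ?_⟩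
  filter_upwards [hu.eventually_pos, hv.eventually_pos] with n hun hvn
  rw [log_mul hun.ne' hvn.ne', add_div]

lemma inv (hu : HasGrowthExponent u L) : HasGrowthExponent (fun n => (u n)⁻¹) (-L) :=
  ⟨hu.eventually_pos.mono fun n h => inv_pos.2 h, by
    simpa only [log_inv, neg_div] using hu.tendsto_log_div_log.neg⟩

lemma div (hu : HasGrowthExponent u L) (hv : HasGrowthExponent v M) :
    HasGrowthExponent (fun n => u n / v n) (L - M) := by
  simpa only [div_eq_mul_inv, sub_eq_add_neg] using hu.mul hv.inv

lemma of_le_of_le (hu : HasGrowthExponent u L) (hw : HasGrowthExponent w L)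
    (huv : ∀ᶠ n in atTop, u n ≤ v n) (hvw : ∀ᶠ n in atTop, v n ≤ w n) :
    HasGrowthExponent v L := by
  refine ⟨hu.eventually_pos.and huv |>.mono fun n h => h.1.trans_le h.2,
    tendsto_of_tendsto_of_tendsto_of_le_of_le' hu.tendsto_log_div_log hw.tendsto_log_div_log
      ?_ ?_⟩
  · filter_upwards [hu.eventually_pos, huv] with n hpos hle
    gcongr
  · filter_upwards [hu.eventually_pos, huv, hvw] with n hpos hle hle'
    have := hpos.trans_le hle
    gcongr

lemma eventually_lt (hu : HasGrowthExponent u L) (hv : HasGrowthExponent v M) (hLM : L < M) :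
    ∀ᶠ n in atTop, u n < v n := by
  filter_upwards [hu.tendsto_log_div_log.eventually_lt hv.tendsto_log_div_log hLM,
    hu.eventually_pos, hv.eventually_pos, log_natCast.eventually_pos] with n hlt hun hvn hlog
  exact (log_lt_log_iff hun hvn).1 ((div_lt_div_iff_of_pos_right hlog).1 hlt)

lemma tendsto_atTop (hu : HasGrowthExponent u L) (hL : 0 < L) : Tendsto u atTop atTop := by
  refine Filter.tendsto_atTop.2 fun b => ?_
  filter_upwards [(const (lt_max_of_lt_right one_pos : 0 < max b 1)).eventually_lt hu hL]
    with n hn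
  exact (le_max_left b 1).trans hn.le

lemma of_abs_sub_le (hu : HasGrowthExponent u L) (hL : 0 < L) {c : ℝ}
    (huv : ∀ᶠ n in atTop, |v n - u n| ≤ c) : HasGrowthExponent v L := by
  have hlarge := (hu.tendsto_atTop hL).eventually_ge_atTop (2 * c)
  have hlower := (const (half_pos one_pos)).mul hu
  have hupper := (const two_pos).mul hu
  rw [zero_add] at hlower hupper
  refine hlower.of_le_of_le hupper ?_ ?_
  · filter_upwards [huv, hlarge] with n hn hlarge
    linarith [(abs_le.1 hn).1]
  · filter_upwards [huv, hlarge, hu.eventually_pos] with n hn hlarge hpos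
    linarith [(abs_le.1 hn).2]

lemma natFloor (hu : HasGrowthExponent u L) (hL : 0 < L) :
    HasGrowthExponent (fun n => (⌊u n⌋₊ : ℝ)) L :=
  hu.of_abs_sub_le (c := 1) hL <| hu.eventually_pos.mono fun n hpos => abs_le.2
    ⟨by linarith [Nat.lt_floor_add_one (u n)], by linarith [Nat.floor_le hpos.le]⟩

lemma natCeil (hu : HasGrowthExponent u L) (hL : 0 < L) :
    HasGrowthExponent (fun n => (⌈u n⌉₊ : ℝ)) L :=
  hu.of_abs_sub_le (c := 1) hL <| hu.eventually_pos.mono fun n hpos => abs_le.2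
    ⟨by linarith [Nat.le_ceil (u n)], by linarith [Nat.ceil_lt_add_one hpos.le]⟩

lemma natCast_add_one : HasGrowthExponent (fun n => (n : ℝ) + 1) 1 :=
  natCast.of_abs_sub_le one_pos (c := 1) (.of_forall fun n => by simp)

lemma natCast_div_four : HasGrowthExponent (fun n => ((n / 4 : ℕ) : ℝ)) 1 := by
  have := (natCast.div (const four_pos)).natFloor (by norm_num)
  simpa only [Nat.floor_div_ofNat, Nat.floor_natCast, sub_zero] using this

end HasGrowthExponent

lemma hasGrowthExponent_zero_of_isLittleO_log_one_div {r : ℕ → ℝ} (hpos : ∀ n, 0 < r n)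
    (hlog : (fun n : ℕ => log (1 / r n)) =o[atTop] fun n : ℕ => log n) :
    HasGrowthExponent r 0 :=
  ⟨.of_forall hpos, by
    simpa only [one_div, log_inv, neg_div, neg_neg, neg_zero] using
      hlog.tendsto_div_nhds_zero.neg⟩

end GrowthExponent

section Scales

open scoped Topology

/-- `evenSide n α` as a natural number. -/
def boxSide (n : ℕ) (α : ℝ) : ℕ := (evenSide n α).toNat

/-- The largest `m` for which `m` boxes of side `boxSide n α` in a row have length at most
`ρ / 4`. -/
def arraySize (n : ℕ) (α ρ : ℝ) : ℕ := ⌊ρ / (4 * boxSide n α)⌋₊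

/-- The side of the blocks the array is cut into. It is `o(arraySize n α ρ)`, yet large enough
for `boxSide n α * blockSize n α ρ` to be `n ^ (1 - o(1))` when `ρ` is. -/
def blockSize (n : ℕ) (α ρ : ℝ) : ℕ := ⌈arraySize n α ρ / log n⌉₊

lemma natCast_boxSide (n : ℕ) (α : ℝ) : (boxSide n α : ℤ) = evenSide n α := by
  refine Int.toNat_of_nonneg (mul_nonneg zero_le_two ?_)
  rw [round_eq]
  exact Int.floor_nonneg.2 (by positivity)

lemma abs_boxSide_sub_rpow_le (n : ℕ) (α : ℝ) : |(boxSide n α : ℝ) - (n : ℝ) ^ α| ≤ 1 := by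
  have hround := abs_sub_round ((n : ℝ) ^ α / 2)
  have hside : (boxSide n α : ℝ) = 2 * round ((n : ℝ) ^ α / 2) := by
    exact_mod_cast congrArg (Int.cast : ℤ → ℝ) (natCast_boxSide n α)
  rw [abs_le] at hround ⊢
  constructor <;> linarith

variable {α : ℝ} {ρ : ℕ → ℝ}

lemma hasGrowthExponent_boxSide (hα : 0 < α) :
    HasGrowthExponent (fun n => (boxSide n α : ℝ)) α :=
  (HasGrowthExponent.natCast_rpow α).of_abs_sub_le hα
    (.of_forall fun n => abs_boxSide_sub_rpow_le n α)

lemma hasGrowthExponent_arraySize (hα : α ∈ Set.Ioo 0 1) (hρ : HasGrowthExponent ρ 1) :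
    HasGrowthExponent (fun n => (arraySize n α (ρ n) : ℝ)) (1 - α) := by
  have hratio := hρ.div ((HasGrowthExponent.const four_pos).mul (hasGrowthExponent_boxSide hα.1))
  rw [zero_add] at hratio
  exact hratio.natFloor (sub_pos.2 hα.2)

lemma hasGrowthExponent_blockSize (hα : α ∈ Set.Ioo 0 1) (hρ : HasGrowthExponent ρ 1) :
    HasGrowthExponent (fun n => (blockSize n α (ρ n) : ℝ)) (1 - α) := by
  have hratio := (hasGrowthExponent_arraySize hα hρ).div HasGrowthExponent.log_natCast
  rw [sub_zero] at hratio
  exact hratio.natCeil (sub_pos.2 hα.2)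

lemma blockSize_le_arraySize {n : ℕ} {ρ : ℝ} (hn : 1 ≤ log n) :
    blockSize n α ρ ≤ arraySize n α ρ :=
  Nat.ceil_le.2 (div_le_self (Nat.cast_nonneg _) hn)

lemma four_mul_arraySize_mul_boxSide_le {n : ℕ} {ρ : ℝ} (hρ : 0 ≤ ρ) (ha : 0 < boxSide n α) :
    4 * ((arraySize n α ρ : ℝ) * boxSide n α) ≤ ρ := by
  have ha' : (0 : ℝ) < 4 * boxSide n α := by positivity
  calc 4 * ((arraySize n α ρ : ℝ) * boxSide n α) = arraySize n α ρ * (4 * boxSide n α) := by ring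
    _ ≤ ρ := (le_div_iff₀ ha').1 (Nat.floor_le (by positivity))

lemma eventually_admissibleScales (hα : α ∈ Set.Ioo 0 1) (hρ : HasGrowthExponent ρ 1)
    (hρn : ∀ n : ℕ, 4 * ρ n ≤ n) :
    ∀ᶠ n in atTop, AdmissibleScales n α (ρ n) (boxSide n α) (blockSize n α (ρ n))
      (arraySize n α (ρ n)) (n / 4) := by
  have hside := hasGrowthExponent_boxSide hα.1
  filter_upwards [hρ.eventually_pos, hside.eventually_pos,
    (hasGrowthExponent_blockSize hα hρ).eventually_pos,
    hside.eventually_lt HasGrowthExponent.natCast_div_four hα.2,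
    tendsto_log_natCast_atTop.eventually_ge_atTop 1] with n hρpos ha hq haR hlog
  have hgrid := four_mul_arraySize_mul_boxSide_le hρpos.le (Nat.cast_pos.1 ha)
  have hle : boxSide n α * arraySize n α (ρ n) ≤ n := by
    have : (boxSide n α : ℝ) * arraySize n α (ρ n) ≤ n := by linarith [hρn n]
    exact_mod_cast this
  exact {
    evenSide_eq := (natCast_boxSide n α).symm
    one_le_side := Nat.cast_pos.1 ha
    one_le_block := Nat.cast_pos.1 hq
    side_mul_block_le :=
      (Nat.mul_le_mul_left _ (blockSize_le_arraySize hlog)).trans (hle.trans n.le_succ)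
    side_lt_radius := Nat.cast_lt.1 haR
    radius_le := Nat.mul_div_le n 4
    grid_le := hgrid
    ball_le := hρn n }

lemma tendsto_blockSize_add_one_div_arraySize (hα : α ∈ Set.Ioo 0 1)
    (hρ : HasGrowthExponent ρ 1) :
    Tendsto (fun n => ((blockSize n α (ρ n) : ℝ) + 1) / arraySize n α (ρ n)) atTop (𝓝 0) := by
  have harray := hasGrowthExponent_arraySize hα hρ
  have hbound : Tendsto (fun n : ℕ => 1 / log n + 2 / arraySize n α (ρ n)) atTop (𝓝 (0 + 0)) :=
    (tendsto_log_natCast_atTop.const_div_atTop 1).add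
      ((harray.tendsto_atTop (sub_pos.2 hα.2)).const_div_atTop 2)
  rw [add_zero] at hbound
  refine squeeze_zero' (.of_forall fun n => by positivity) ?_ hbound
  filter_upwards [harray.eventually_pos, HasGrowthExponent.log_natCast.eventually_pos]
    with n hm hlog
  have hq : (blockSize n α (ρ n) : ℝ) < arraySize n α (ρ n) / log n + 1 :=
    Nat.ceil_lt_add_one (by positivity)
  calc ((blockSize n α (ρ n) : ℝ) + 1) / arraySize n α (ρ n)
      ≤ (arraySize n α (ρ n) / log n + 2) / arraySize n α (ρ n) :=
        div_le_div_of_nonneg_right (by linarith) hm.le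
    _ = 1 / log n + 2 / arraySize n α (ρ n) := by field_simp

lemma tendsto_gridCorrelation (hα : α ∈ Set.Ioo 0 1) (hρ : HasGrowthExponent ρ 1) :
    Tendsto (fun n => gridCorrelation n (boxSide n α) (blockSize n α (ρ n))
      (arraySize n α (ρ n)) (n / 4)) atTop (𝓝 0) := by
  have hside := hasGrowthExponent_boxSide hα.1
  have hsucc := HasGrowthExponent.natCast_add_one.tendsto_log_div_log
  have hblock := (hside.mul (hasGrowthExponent_blockSize hα hρ)).tendsto_log_div_log
  have hradius := HasGrowthExponent.natCast_div_four.tendsto_log_div_log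
  have hinv := tendsto_log_natCast_atTop.const_div_atTop 1
  have hlim := ((((hinv.add hsucc).mul
    ((tendsto_blockSize_add_one_div_arraySize hα hρ).pow 2)).add (hsucc.sub hblock)).div
      (hradius.sub hside.tendsto_log_div_log) (sub_pos.2 hα.2).ne')
  have hvalue : ((0 + 1) * 0 ^ 2 + (1 - (α + (1 - α)))) / (1 - α) = 0 := by ring
  rw [hvalue] at hlim
  refine hlim.congr' ?_
  filter_upwards [HasGrowthExponent.log_natCast.eventually_pos] with n hlog
  refine Eq.trans ?_ (div_div_div_cancel_right₀ hlog.ne' _ _)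
  rw [Pi.div_apply]
  congr 1 <;> ring

lemma eventually_rpow_le_mul_arraySize_sq {ξ P : ℝ} (hα : α ∈ Set.Ioo 0 1)
    (hρ : HasGrowthExponent ρ 1) (hξ : 0 < ξ) (hP : 0 < P) :
    ∀ᶠ n : ℕ in atTop,
      (n : ℝ) ^ (2 * (1 - α) - ξ) ≤ P * (arraySize n α (ρ n) : ℝ) ^ 2 / 2 := by
  have harray := hasGrowthExponent_arraySize hα hρ
  have hsq := (HasGrowthExponent.const (half_pos hP)).mul (harray.mul harray)
  filter_upwards [(HasGrowthExponent.natCast_rpow _).eventually_lt hsq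
    (by linarith : 2 * (1 - α) - ξ < 0 + (1 - α + (1 - α)))] with n hn
  exact hn.le.trans_eq (by ring)

end Scales

section Conclusion

open ProbabilityTheory
open scoped Topology

lemma exists_forall_jointProb_posOrthant_le (N : ℕ) {η : ℝ} (hη : 0 < η) :
    ∃ δ : ℝ, 0 < δ ∧ δ ≤ 1 ∧ ∀ s, |s| < δ →
      jointProb (posOrthant (Fin N) : Set (Spin N)) s ≤ posProb N ^ 2 + η := by
  have hlim := tendsto_jointProb (isOpen_posOrthant (Fin N)).measurableSet
    (posOrthant (Fin N)).convex
  obtain ⟨δ, hδ, hclose⟩ := Metric.eventually_nhds_iff.1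
    (hlim.eventually_le_const (lt_add_of_pos_right (posProb N ^ 2) hη))
  refine ⟨min δ 1, lt_min hδ one_pos, min_le_right _ _, fun s hs => hclose ?_⟩
  rw [dist_zero_right, norm_eq_abs]
  exact hs.trans_le (min_le_left _ _)

theorem tendsto_real_countPos_le (N : ℕ) {D : Set (ℝ × ℝ)} {ρ : ℕ → ℝ} {α ξ : ℝ}
    (hρ : HasGrowthExponent ρ 1) (hρn : ∀ n : ℕ, 4 * ρ n ≤ n)
    (hD : ∀ n, latBall (ρ n) ⊆ Dn D n) (hα : α ∈ Set.Ioo 0 1) (hξ : 0 < ξ) :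
    Tendsto (fun n : ℕ => (gff n N).real
      {φ | (countPos D N n α (ρ n) φ : ℝ) ≤ (n : ℝ) ^ (2 * (1 - α) - ξ)}) atTop (𝓝 0) := by
  have hp := posProb_pos N
  refine tendsto_order.2 ⟨fun b hb => .of_forall fun n => hb.trans_le measureReal_nonneg,
    fun ε hε => ?_⟩
  obtain ⟨δ, hδ, hδ1, hjoint⟩ :=
    exists_forall_jointProb_posOrthant_le N (η := posProb N ^ 2 * ε / 8) (by positivity)
  have hcorr := (tendsto_gridCorrelation hα hρ).const_mul (256 * π / δ ^ 2)
  rw [mul_zero] at hcorr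
  filter_upwards [eventually_admissibleScales hα hρ hρn,
    (hasGrowthExponent_arraySize hα hρ).eventually_pos,
    eventually_rpow_le_mul_arraySize_sq hα hρ hξ hp,
    hcorr.eventually_lt_const (by positivity : 0 < posProb N ^ 2 * ε / 8)]
    with n hscales hm hthreshold hsmall
  have hbound := hscales.posProb_sq_mul_real_countPos_le (Nat.cast_pos.1 hm) (hD n) hδ hδ1 hjoint
  calc (gff n N).real {φ | (countPos D N n α (ρ n) φ : ℝ) ≤ (n : ℝ) ^ (2 * (1 - α) - ξ)}
      ≤ (gff n N).real
          {φ | (countPos D N n α (ρ n) φ : ℝ) ≤ posProb N * arraySize n α (ρ n) ^ 2 / 2} :=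
        measureReal_mono fun φ hφ => le_trans hφ hthreshold
    _ < ε := lt_of_mul_lt_mul_left (by linarith) (by positivity : 0 ≤ posProb N ^ 2 / 4)

theorem number_of_positive_boxes_general (N : ℕ) (D : Set (ℝ × ℝ))
    (r : ℕ → ℝ) (hrpos : ∀ n, 0 < r n) (hrquarter : ∀ n, r n ≤ 1 / 4)
    (hrlog : (fun n : ℕ => Real.log (1 / r n)) =o[atTop] fun n : ℕ => Real.log n)
    (hrD : ∀ n : ℕ, ∀ x : Site, x ∈ latBall (r n * n) → x ∈ Dn D n)
    (α ξ : ℝ) (hα : α ∈ Set.Ioo (0 : ℝ) 1) (hξ : 0 < ξ) :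
    Tendsto
      (fun n : ℕ =>
        gff n N {φ : Conf N |
          (countPos D N n α (r n * n) φ : ℝ) ≤ (n : ℝ) ^ (2 * (1 - α) - ξ)})
      atTop (𝓝 0) := by
  have hradius : HasGrowthExponent (fun n => r n * n) (0 + 1) :=
    (hasGrowthExponent_zero_of_isLittleO_log_one_div hrpos hrlog).mul HasGrowthExponent.natCast
  rw [zero_add] at hradius
  have hquarter : ∀ n : ℕ, 4 * (r n * n) ≤ n := fun n => by
    nlinarith [hrquarter n, n.cast_nonneg (α := ℝ)]
  have hreal := ENNReal.tendsto_ofReal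
    (tendsto_real_countPos_le N hradius hquarter hrD hα hξ)
  simpa only [ofReal_measureReal (measure_ne_top _ _), ENNReal.ofReal_zero] using hreal

end Conclusion

/-- **Lemma (number of positive boxes).**
For any `α ∈ (0,1)` and `ξ > 0`, `P_n[N^α_+ ≤ n^{2(1-α)-ξ}] → 0` as `n → ∞`. -/
theorem number_of_positive_boxes (N : ℕ) (hN : 0 < N)
    (D : Set (ℝ × ℝ)) (hDopen : IsOpen D) (hD0 : (0, 0) ∈ D) (hDsub : D ⊆ unitSq)
    (ι : ℝ) (hι : 0 < ι) (hdist : ∀ p ∈ D, ∀ q ∈ frontier unitSq, ι ≤ dist p q)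
    (r : ℕ → ℝ) (hrpos : ∀ n, 0 < r n) (hrquarter : ∀ n, r n ≤ 1 / 4)
    (hrlog : (fun n : ℕ => Real.log (1 / r n)) =o[atTop] fun n : ℕ => Real.log n)
    (hrD : ∀ n : ℕ, ∀ x : Site, x ∈ latBall (r n * n) → x ∈ Dn D n)
    (α ξ : ℝ) (hα : α ∈ Set.Ioo (0 : ℝ) 1) (hξ : 0 < ξ) :
    Tendsto
      (fun n : ℕ =>
        gff n N {φ : Conf N |
          (countPos D N n α (r n * n) φ : ℝ) ≤ (n : ℝ) ^ (2 * (1 - α) - ξ)})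
      atTop (nhds 0) :=
  number_of_positive_boxes_general N D r hrpos hrquarter hrlog hrD α ξ hα hξ

end
end

section
/- Let N ∈ ℕ, 1 ≤ L ≤ N, ε > 0, and s ∈ ℝ^N with s¹ ≥ ⋯ ≥ s^N ≥ 0, s^L > 0, s^{L+1} = ⋯ = s^N = 0, and |s| ≤ 2(1−ε). Then there exist positive constants α, K, δ, ξ, ζ > 0 verifying simultaneously: (C1) δ² < min( (s^L)²/4 , (2α/(N K))·(2(1 − α/K) − ξ) ); (C2) ξ < min( (Σ_{i=1}^{L−1}(s^i−δ)² + (s^L+δ)²)/(2(1 − α/K)) , 2(1 − α/K) ); (C3) ξ > ζ + Σ_{i=1}^{L}(s^i−δ)²/(2α(1 − 1/K)³); (C4) K ≥ 2α/(1 − α − ζ/2); (C5) Σ_{i=1}^{L}(s^i−δ)² < 4α²(1 − 1/K)⁴. -/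
open MeasureTheory Real Filter Asymptotics
open scoped ENNReal NNReal Classical BigOperators

noncomputable section

/-!
Write `q(δ) = ∑_{i ≤ L} (s^i - δ)²`, so that the numerator in (C2) is `q(δ) + 4 s^L δ`. Use `δ` as
the small parameter and take `1 - α`, `1 / K` and `ζ` all proportional to `δ²`. Then the lower bound
(C3) on `ξ` exceeds `q(δ) / 2` by `O(δ²)` only, whereas the upper bound (C2) exceeds it by at least
`2 s^L δ`, and this leaves room for `ξ`. Since `q(0) ≤ |s|² < 4`, the remaining constraints hold
strictly in the limit `δ → 0`, provided the constant in `1 / K = O(δ²)` is large enough for (C1).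
-/

/-- The constraints (C1)–(C5) on positive parameters `α, K, δ, ξ, ζ`, where `b` stands for `s^L` and
`q` for `∑_{i ≤ L} (s^i - δ)²`. The numerator `∑_{i < L} (s^i - δ)² + (s^L + δ)²` of (C2) is written
as `q + 4 b δ`, and `N` may be any real number. -/
def ParameterConstraints (N b q α K δ ξ ζ : ℝ) : Prop :=
  0 < α ∧ 0 < K ∧ 0 < δ ∧ 0 < ξ ∧ 0 < ζ ∧
    δ ^ 2 < min (b ^ 2 / 4) (2 * α / (N * K) * (2 * (1 - α / K) - ξ)) ∧
    ξ < min ((q + 4 * b * δ) / (2 * (1 - α / K))) (2 * (1 - α / K)) ∧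
    ζ + q / (2 * α * (1 - 1 / K) ^ 3) < ξ ∧
    2 * α / (1 - α - ζ / 2) ≤ K ∧
    q < 4 * α ^ 2 * (1 - 1 / K) ^ 4

/-- The lower bound on `ξ` in (C3) for `α = 1 - u`, `K = 4 / u` and `ζ = u`. -/
def xiLowerBound (q u : ℝ) : ℝ :=
  u + q / (2 * (1 - u) * (1 - u / 4) ^ 3)

theorem xiLowerBound_zero_right (q : ℝ) : xiLowerBound q 0 = q / 2 := by
  simp [xiLowerBound]

theorem xiLowerBound_pos {q u : ℝ} (hq : 0 ≤ q) (hu : 0 < u) (hu1 : u < 1) :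
    0 < xiLowerBound q u := by
  have hK : 0 < 1 - u / 4 := by linarith
  unfold xiLowerBound
  positivity

theorem one_le_one_add_mul_one_sub_mul_pow {u : ℝ} (hu : 0 ≤ u) (hu4 : u ≤ 1 / 4) :
    1 ≤ (1 + 4 * u) * ((1 - u) * (1 - u / 4) ^ 3) := by
  have bernoulli : 1 - 3 / 4 * u ≤ (1 - u / 4) ^ 3 :=
    calc
      1 - 3 / 4 * u = 1 + (3 : ℕ) * -(u / 4) := by push_cast; ring
      _ ≤ (1 + -(u / 4)) ^ 3 := one_add_mul_le_pow (by linarith) 3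
      _ = (1 - u / 4) ^ 3 := by rw [← sub_eq_add_neg]
  calc
    1 ≤ (1 + 4 * u) * ((1 - u) * (1 - 3 / 4 * u)) := by
      nlinarith [mul_nonneg hu (sub_nonneg.2 hu4), mul_nonneg hu (sq_nonneg u)]
    _ ≤ (1 + 4 * u) * ((1 - u) * (1 - u / 4) ^ 3) := by gcongr; linarith

theorem xiLowerBound_le {q u : ℝ} (hq : 0 ≤ q) (hu : 0 ≤ u) (hu4 : u ≤ 1 / 4) :
    xiLowerBound q u ≤ u + q * (1 + 4 * u) / 2 := by
  have hα : 0 < 1 - u := by linarith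
  have hK : 0 < 1 - u / 4 := by linarith
  unfold xiLowerBound
  gcongr u + ?_
  rw [div_le_iff₀ (by positivity)]
  calc
    q ≤ q * ((1 + 4 * u) * ((1 - u) * (1 - u / 4) ^ 3)) :=
      le_mul_of_one_le_right hq (one_le_one_add_mul_one_sub_mul_pow hu hu4)
    _ = q * (1 + 4 * u) / 2 * (2 * (1 - u) * (1 - u / 4) ^ 3) := by ring

theorem xiLowerBound_lt_div {q r u : ℝ} (hq : 0 ≤ q) (hu : 0 ≤ u) (hu4 : u ≤ 1 / 4)
    (hr : 2 * u * (1 + 2 * q) < r) :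
    xiLowerBound q u < (q + r) / (2 * (1 - (1 - u) * (u / 4))) := by
  have hr0 : 0 ≤ r := (by positivity : 0 ≤ 2 * u * (1 + 2 * q)).trans hr.le
  have hden_pos : 0 < 2 * (1 - (1 - u) * (u / 4)) := by nlinarith
  have hden_le : 2 * (1 - (1 - u) * (u / 4)) ≤ 2 := by nlinarith
  calc
    xiLowerBound q u ≤ u + q * (1 + 4 * u) / 2 := xiLowerBound_le hq hu hu4
    _ < (q + r) / 2 := by linarith
    _ ≤ (q + r) / (2 * (1 - (1 - u) * (u / 4))) := by gcongr

theorem exists_parameterConstraints_of_xiLowerBound_lt {N b q δ u ρ : ℝ} (hN : 0 < N) (hq : 0 ≤ q)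
    (hδ : 0 < δ) (hδb : δ ^ 2 < b ^ 2 / 4) (hu : 0 < u) (hu4 : u ≤ 1 / 4) (hρ : 0 < ρ)
    (hδu : 2 * N * δ ^ 2 = ρ * u) (hgap : 2 * u * (1 + 2 * q) < 4 * b * δ)
    (hroom : xiLowerBound q u < 2 * (1 - (1 - u) * (u / 4)) - ρ / (1 - u))
    (hq_lt : q < 4 * (1 - u) ^ 2 * (1 - u / 4) ^ 4) :
    ∃ ξ, ParameterConstraints N b q (1 - u) (4 / u) δ ξ u := by
  obtain ⟨ξ, hlow, hup⟩ := exists_between (lt_min (xiLowerBound_lt_div hq hu.le hu4 hgap) hroom)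
  obtain ⟨hξ_gap, hξ_room⟩ := lt_min_iff.1 hup
  have hα : 0 < 1 - u := by linarith
  have hξ : 0 < ξ := (xiLowerBound_pos hq hu (by linarith)).trans hlow
  have inv_K : 1 / (4 / u) = u / 4 := one_div_div 4 u
  have α_div_K : (1 - u) / (4 / u) = (1 - u) * (u / 4) := by rw [div_div_eq_mul_div, mul_div_assoc]
  have hδ_room : δ ^ 2 < 2 * (1 - u) / (N * (4 / u)) * (2 * (1 - (1 - u) * (u / 4)) - ξ) := by
    calc
      δ ^ 2 = 2 * (1 - u) / (N * (4 / u)) * (ρ / (1 - u)) := by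
        field_simp
        linarith
      _ < _ := by
        gcongr
        linarith
  refine ⟨ξ, hα, by positivity, hδ, hξ, hu, ?_⟩
  rw [inv_K, α_div_K]
  refine ⟨lt_min hδb hδ_room, lt_min hξ_gap ?_, hlow, ?_, hq_lt⟩
  · have : 0 < ρ / (1 - u) := by positivity
    linarith
  · rw [show 1 - (1 - u) - u / 2 = u / 2 by ring, div_le_div_iff₀ (by positivity) hu]
    nlinarith

open scoped Topology in
theorem eventually_xiLowerBound_lt {X : Type*} [TopologicalSpace X] {q u : X → ℝ} {x : X} {ρ : ℝ}
    (hq : ContinuousAt q x) (hu : ContinuousAt u x) (hux : u x = 0) (hρ : q x / 2 + ρ < 2) :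
    ∀ᶠ y in 𝓝 x,
      xiLowerBound (q y) (u y) < 2 * (1 - (1 - u y) * (u y / 4)) - ρ / (1 - u y) := by
  have hlower : ContinuousAt (fun y ↦ xiLowerBound (q y) (u y)) x := by
    unfold xiLowerBound
    fun_prop (disch := norm_num [hux])
  have hupper : ContinuousAt (fun y ↦ 2 * (1 - (1 - u y) * (u y / 4)) - ρ / (1 - u y)) x := by
    fun_prop (disch := norm_num [hux])
  refine hlower.eventually_lt hupper ?_
  calc
    xiLowerBound (q x) (u x) = q x / 2 := by rw [hux, xiLowerBound_zero_right]
    _ < 2 - ρ := by linarith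
    _ = 2 * (1 - (1 - u x) * (u x / 4)) - ρ / (1 - u x) := by simp [hux]

open scoped Topology in
theorem exists_parameterConstraints {N b : ℝ} {q : ℝ → ℝ} (hN : 0 < N) (hb : 0 < b)
    (hq_cont : ContinuousAt q 0) (hq : ∀ δ, 0 ≤ q δ) (hq0 : q 0 < 4) :
    ∃ α K δ ξ ζ, ParameterConstraints N b (q δ) α K δ ξ ζ := by
  obtain ⟨ρ, hρ, hρ_lt⟩ : ∃ ρ, 0 < ρ ∧ ρ < 2 - q 0 / 2 := exists_between (by linarith)
  -- With `K = 4 / u`, the factor `2 N / ρ` makes (C1) read `ξ < 2 (1 - α / K) - ρ / α`,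
  -- where the right-hand side tends to `2 - ρ > q 0 / 2`.
  let u : ℝ → ℝ := fun δ ↦ 2 * N / ρ * δ ^ 2
  have hu0 : u 0 = 0 := by simp [u]
  have hu_cont : ContinuousAt u 0 := by fun_prop
  have hδb : ∀ᶠ δ in 𝓝 (0 : ℝ), δ ^ 2 < b ^ 2 / 4 :=
    ContinuousAt.eventually_lt (by fun_prop) (by fun_prop) (by simpa using pow_pos hb 2)
  have hu4 : ∀ᶠ δ in 𝓝 0, u δ < 1 / 4 :=
    hu_cont.eventually_lt continuousAt_const (by norm_num [hu0])
  have hgap : ∀ᶠ δ in 𝓝 0, 2 * (2 * N / ρ * δ) * (1 + 2 * q δ) < 4 * b :=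
    ContinuousAt.eventually_lt (by fun_prop) (by fun_prop) (by simpa using hb)
  have hroom : ∀ᶠ δ in 𝓝 0,
      xiLowerBound (q δ) (u δ) < 2 * (1 - (1 - u δ) * (u δ / 4)) - ρ / (1 - u δ) :=
    eventually_xiLowerBound_lt hq_cont hu_cont hu0 (by linarith)
  have hq_lt : ∀ᶠ δ in 𝓝 0, q δ < 4 * (1 - u δ) ^ 2 * (1 - u δ / 4) ^ 4 :=
    hq_cont.eventually_lt (by fun_prop) (by norm_num [hu0, hq0])
  obtain ⟨δ, ⟨hδb, hu4, hgap, hroom, hq_lt⟩, hδ : 0 < δ⟩ :=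
    ((hδb.and <| hu4.and <| hgap.and <| hroom.and hq_lt).filter_mono nhdsWithin_le_nhds |>.and
      self_mem_nhdsWithin).exists (f := 𝓝[>] 0)
  have hgap_u : 2 * u δ * (1 + 2 * q δ) < 4 * b * δ := by
    linear_combination δ * hgap
  have hu : 0 < u δ := by positivity
  have hδu : 2 * N * δ ^ 2 = ρ * u δ := by
    simp only [u]
    field_simp
  obtain ⟨ξ, hξ⟩ := exists_parameterConstraints_of_xiLowerBound_lt hN (hq δ) hδ hδb hu hu4.le hρ hδu
    hgap_u hroom hq_lt
  exact ⟨_, _, _, _, _, hξ⟩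

theorem sum_erase_sq_sub_add_sq_add {ι R : Type*} [DecidableEq ι] [CommRing R] {I : Finset ι}
    {j : ι} (hj : j ∈ I) (s : ι → R) (δ : R) :
    ∑ i ∈ I.erase j, (s i - δ) ^ 2 + (s j + δ) ^ 2 = ∑ i ∈ I, (s i - δ) ^ 2 + 4 * s j * δ := by
  rw [← Finset.sum_erase_add I _ hj]
  ring

theorem sum_sq_lt_four_of_sqrt_le {ι : Type*} {I J : Finset ι} (hIJ : I ⊆ J) {s : ι → ℝ} {ε : ℝ}
    (hε : 0 < ε) (hs : √(∑ i ∈ J, s i ^ 2) ≤ 2 * (1 - ε)) : ∑ i ∈ I, s i ^ 2 < 4 := by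
  have hlt : √(∑ i ∈ I, s i ^ 2) < 2 :=
    calc
      √(∑ i ∈ I, s i ^ 2) ≤ √(∑ i ∈ J, s i ^ 2) := by gcongr
      _ < 2 := by linarith
  rw [Real.sqrt_lt' two_pos] at hlt
  linarith

theorem parameter_constraints_nonempty_general {ι : Type*} [DecidableEq ι] {I : Finset ι} {j : ι}
    (hj : j ∈ I) {s : ι → ℝ} (hsj : 0 < s j) (hs : ∑ i ∈ I, s i ^ 2 < 4) {N : ℝ} (hN : 0 < N) :
    ∃ α K δ ξ ζ : ℝ, 0 < α ∧ 0 < K ∧ 0 < δ ∧ 0 < ξ ∧ 0 < ζ ∧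
      δ ^ 2 < min (s j ^ 2 / 4) (2 * α / (N * K) * (2 * (1 - α / K) - ξ)) ∧
      ξ < min ((∑ i ∈ I.erase j, (s i - δ) ^ 2 + (s j + δ) ^ 2) / (2 * (1 - α / K)))
        (2 * (1 - α / K)) ∧
      ζ + (∑ i ∈ I, (s i - δ) ^ 2) / (2 * α * (1 - 1 / K) ^ 3) < ξ ∧
      2 * α / (1 - α - ζ / 2) ≤ K ∧
      ∑ i ∈ I, (s i - δ) ^ 2 < 4 * α ^ 2 * (1 - 1 / K) ^ 4 := by
  simp only [sum_erase_sq_sub_add_sq_add hj]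
  exact exists_parameterConstraints (q := fun δ ↦ ∑ i ∈ I, (s i - δ) ^ 2) hN hsj (by fun_prop)
    (fun δ ↦ by positivity) (by simpa using hs)

/-- **Lemma (the parameter constraints can be met).**
For `s ∈ ℝ^N` with `s¹ ≥ ⋯ ≥ s^N ≥ 0`, `s^L > 0`, `s^i = 0` for `i > L`, and
`|s| ≤ 2(1-ε)`, there exist positive `α, K, δ, ξ, ζ` satisfying (C1)–(C5). -/
theorem parameter_constraints_nonempty (N L : ℕ) (hL1 : 1 ≤ L) (hLN : L ≤ N)
    (ε : ℝ) (hε : 0 < ε) (s : ℕ → ℝ)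
    (hmono : ∀ i, 1 ≤ i → i < N → s (i + 1) ≤ s i)
    (hpos : ∀ i, 1 ≤ i → i ≤ N → 0 ≤ s i)
    (hsL : 0 < s L) (hzero : ∀ i, L < i → i ≤ N → s i = 0)
    (hnorm : Real.sqrt (∑ i ∈ Finset.Icc 1 N, s i ^ 2) ≤ 2 * (1 - ε)) :
    ∃ α K δ ξ ζ : ℝ, 0 < α ∧ 0 < K ∧ 0 < δ ∧ 0 < ξ ∧ 0 < ζ ∧
      -- (C1)
      δ ^ 2 < min ((s L) ^ 2 / 4) (2 * α / (N * K) * (2 * (1 - α / K) - ξ)) ∧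
      -- (C2)
      ξ < min ((∑ i ∈ Finset.Icc 1 (L - 1), (s i - δ) ^ 2 + (s L + δ) ^ 2) /
            (2 * (1 - α / K)))
          (2 * (1 - α / K)) ∧
      -- (C3)
      ζ + (∑ i ∈ Finset.Icc 1 L, (s i - δ) ^ 2) / (2 * α * (1 - 1 / K) ^ 3) < ξ ∧
      -- (C4)
      2 * α / (1 - α - ζ / 2) ≤ K ∧
      -- (C5)
      (∑ i ∈ Finset.Icc 1 L, (s i - δ) ^ 2) < 4 * α ^ 2 * (1 - 1 / K) ^ 4 := by
  have hL : (Finset.Icc 1 L).erase L = Finset.Icc 1 (L - 1) := by grind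
  simpa only [hL] using parameter_constraints_nonempty_general (Finset.right_mem_Icc.2 hL1) hsL
    (sum_sq_lt_four_of_sqrt_le (Finset.Icc_subset_Icc_right hLN) hε hnorm)
    (N := N) (by exact_mod_cast hL1.trans hLN)

end
end
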